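/- arXiv:hep-th/9709112 — 11 statements merged into one kernel-verified Lean document; each statement's English description precedes it below -/
import Mathlib

section
/- Let n₁, n₂ be natural numbers and let w₁ : Fin n₁ → ℝ and w₂ : Fin n₂ → ℝ take only the values +1 and −1. Suppose n₁ is even and the volume element ω₁ = e₁e₂⋯e_{n₁} of Clℝ(w₁) satisfies ω₁² = 1 (i.e. Clℝ(w₁) is a positive Clifford algebra). Then the Clifford algebra Clℝ(Sum.elim w₁ w₂ ∘ finSumFinEquiv.symm) on Fin (n₁ + n₂) → ℝ is isomorphic as an ℝ-algebra to the tensor product Clℝ(w₁) ⊗[ℝ] Clℝ(w₂). -/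
open CliffordAlgebra TensorProduct

/-- The volume element `ω = e₁e₂⋯eₙ` of the Clifford algebra of the weighted
sum-of-squares form with weights `w : Fin n → ℝ`. -/
noncomputable def volumeElem {n : ℕ} (w : Fin n → ℝ) :
    CliffordAlgebra (QuadraticMap.weightedSumSquares ℝ w) :=
  ((List.finRange n).map fun i =>
    CliffordAlgebra.ι (QuadraticMap.weightedSumSquares ℝ w) (Pi.single i 1)).prod

namespace KaroubiPos

section general
variable {M₁ M₂ : Type*} [AddCommGroup M₁] [AddCommGroup M₂] [Module ℝ M₁] [Module ℝ M₂]
  (Q₁ : QuadraticForm ℝ M₁) (Q₂ : QuadraticForm ℝ M₂)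

/-- forward linear map -/
noncomputable def fwdLin (z : CliffordAlgebra Q₁) :
    M₁ × M₂ →ₗ[ℝ] CliffordAlgebra Q₁ ⊗[ℝ] CliffordAlgebra Q₂ :=
  LinearMap.coprod
    ((Algebra.TensorProduct.includeLeft : CliffordAlgebra Q₁ →ₐ[ℝ]
      CliffordAlgebra Q₁ ⊗[ℝ] CliffordAlgebra Q₂).toLinearMap ∘ₗ ι Q₁)
    (TensorProduct.mk ℝ (CliffordAlgebra Q₁) (CliffordAlgebra Q₂) z ∘ₗ ι Q₂)

theorem fwdLin_apply (z : CliffordAlgebra Q₁) (m : M₁ × M₂) :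
    fwdLin Q₁ Q₂ z m = ι Q₁ m.1 ⊗ₜ[ℝ] 1 + z ⊗ₜ[ℝ] ι Q₂ m.2 := by
  simp [fwdLin]

theorem general (z : CliffordAlgebra Q₁) (hz : z * z = 1) (hev : z ∈ evenOdd Q₁ 0)
    (hanti : ∀ m, ι Q₁ m * z = - (z * ι Q₁ m)) :
    Nonempty (CliffordAlgebra (Q₁.prod Q₂) ≃ₐ[ℝ]
      CliffordAlgebra Q₁ ⊗[ℝ] CliffordAlgebra Q₂) := by
  have hF : ∀ m, fwdLin Q₁ Q₂ z m * fwdLin Q₁ Q₂ z m = algebraMap ℝ _ ((Q₁.prod Q₂) m) := by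
    intro m
    rw [fwdLin_apply]
    simp only [mul_add, add_mul, Algebra.TensorProduct.tmul_mul_tmul, one_mul, mul_one, hz,
      hanti, ι_sq_scalar, QuadraticMap.prod_apply, map_add, TensorProduct.neg_tmul]
    rw [Algebra.TensorProduct.algebraMap_apply, Algebra.TensorProduct.algebraMap_apply]
    rw [Algebra.algebraMap_eq_smul_one (A := CliffordAlgebra Q₂),
      Algebra.algebraMap_eq_smul_one (Q₂ m.2), TensorProduct.tmul_smul, TensorProduct.smul_tmul']
    abel
  let F := CliffordAlgebra.lift (Q₁.prod Q₂) ⟨fwdLin Q₁ Q₂ z, hF⟩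
  have F_ι : ∀ m, F (ι _ m) = ι Q₁ m.1 ⊗ₜ[ℝ] 1 + z ⊗ₜ[ℝ] ι Q₂ m.2 := by
    intro m
    rw [← fwdLin_apply]
    exact lift_ι_apply _ _ _
  let I := CliffordAlgebra.map (QuadraticMap.Isometry.inl Q₁ Q₂)
  have I_ι : ∀ m, I (ι Q₁ m) = ι _ (m, 0) := fun m => by
    simp only [I, map_apply_ι]; rfl
  have hort : ∀ x y, (Q₁.prod Q₂).IsOrtho (QuadraticMap.Isometry.inl Q₁ Q₂ x)
      (QuadraticMap.Isometry.inr Q₁ Q₂ y) := fun x y => .inl_inr ..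
  have hcomm : ∀ m₂, Commute (I z) (ι (Q₁.prod Q₂) (0, m₂)) := by
    intro m₂
    have := commute_map_mul_map_of_isOrtho_of_mem_evenOdd_zero_left
      (QuadraticMap.Isometry.inl Q₁ Q₂) (QuadraticMap.Isometry.inr Q₁ Q₂) hort z (ι Q₂ m₂) hev (ι_mem_evenOdd_one Q₂ m₂)
    rw [map_apply_ι] at this
    exact this
  have IzIz : I z * I z = 1 := by rw [← map_mul, hz, map_one]
  let gl : M₂ →ₗ[ℝ] CliffordAlgebra (Q₁.prod Q₂) :=
    LinearMap.mulLeft ℝ (I z) ∘ₗ ι (Q₁.prod Q₂) ∘ₗ LinearMap.inr ℝ M₁ M₂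
  have gl_apply : ∀ m, gl m = I z * ι _ (0, m) := fun m => rfl
  have hg : ∀ m, gl m * gl m = algebraMap ℝ _ (Q₂ m) := by
    intro m
    rw [gl_apply]
    rw [(hcomm m).symm.mul_mul_mul_comm, IzIz, one_mul, ι_sq_scalar]
    simp
  let G₂ := CliffordAlgebra.lift Q₂ ⟨gl, hg⟩
  have G₂_ι : ∀ m, G₂ (ι _ m) = I z * ι _ (0, m) := fun m => lift_ι_apply _ _ _
  have hc0 : ∀ m₁ m₂, Commute (I (ι Q₁ m₁)) (G₂ (ι Q₂ m₂)) := by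
    intro m₁ m₂
    have h1 : I (ι Q₁ m₁) * I z = -(I z * I (ι Q₁ m₁)) := by
      rw [← map_mul, hanti, map_neg, map_mul]
    have h2 : I (ι Q₁ m₁) * ι (Q₁.prod Q₂) (0, m₂) = -(ι (Q₁.prod Q₂) (0, m₂) * I (ι Q₁ m₁)) := by
      rw [I_ι]
      exact ι_mul_ι_comm_of_isOrtho (hort m₁ m₂)
    rw [commute_iff_eq, G₂_ι, ← mul_assoc, h1, neg_mul, mul_assoc, h2, mul_neg, neg_neg, mul_assoc]
  have hc1 : ∀ x m₂, Commute (I x) (G₂ (ι Q₂ m₂)) := by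
    intro x m₂
    induction x using CliffordAlgebra.induction with
    | algebraMap r => rw [AlgHom.commutes]; exact Algebra.commute_algebraMap_left _ _
    | ι m => exact hc0 m m₂
    | mul a b ha hb => rw [map_mul]; exact ha.mul_left hb
    | add a b ha hb => rw [map_add]; exact ha.add_left hb
  have hc : ∀ x y, Commute (I x) (G₂ y) := by
    intro x y
    induction y using CliffordAlgebra.induction with
    | algebraMap r => rw [AlgHom.commutes]; exact Algebra.commute_algebraMap_right _ _
    | ι m => exact hc1 x m
    | mul a b ha hb => rw [map_mul]; exact ha.mul_right hb
    | add a b ha hb => rw [map_add]; exact ha.add_right hb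
  let G := Algebra.TensorProduct.lift I G₂ hc
  have hFI : ∀ x, F (I x) = x ⊗ₜ[ℝ] 1 := by
    have : F.comp I = Algebra.TensorProduct.includeLeft := by
      apply CliffordAlgebra.hom_ext
      ext m
      change F (I (ι Q₁ m)) = ι Q₁ m ⊗ₜ[ℝ] 1
      rw [I_ι, F_ι]
      simp
    exact fun x => DFunLike.congr_fun this x
  refine ⟨AlgEquiv.ofAlgHom F G ?_ ?_⟩
  · apply Algebra.TensorProduct.ext
    · apply AlgHom.ext
      intro x
      change F (G (x ⊗ₜ[ℝ] 1)) = x ⊗ₜ[ℝ] 1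
      simp only [G, Algebra.TensorProduct.lift_tmul, map_one, mul_one, hFI]
    · apply CliffordAlgebra.hom_ext
      apply LinearMap.ext
      intro m
      change F (G (1 ⊗ₜ[ℝ] ι Q₂ m)) = 1 ⊗ₜ[ℝ] ι Q₂ m
      simp only [G, Algebra.TensorProduct.lift_tmul, map_one, one_mul]
      rw [G₂_ι, map_mul, hFI, F_ι]
      simp [hz]
  · apply CliffordAlgebra.hom_ext
    apply LinearMap.ext
    intro m
    change G (F (ι _ m)) = ι _ m
    rw [F_ι, map_add]
    simp only [G, Algebra.TensorProduct.lift_tmul, map_one, mul_one]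
    rw [G₂_ι, ← mul_assoc, IzIz, one_mul, I_ι, ← map_add]
    simp

end general

section vol
variable {n : ℕ} (w : Fin n → ℝ)

local notation "QQ" => QuadraticMap.weightedSumSquares ℝ w

theorem ortho {i j : Fin n} (h : i ≠ j) :
    (QQ).IsOrtho (Pi.single i (1:ℝ)) (Pi.single j (1:ℝ)) := by
  rw [QuadraticMap.isOrtho_def]
  simp only [QuadraticMap.weightedSumSquares_apply]
  rw [← Finset.sum_add_distrib]
  refine Finset.sum_congr rfl fun k _ => ?_
  by_cases hi : k = i
  · subst hi
    simp [Pi.single_eq_of_ne h]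
  · simp [Pi.single_eq_of_ne hi]

theorem prod_mem (l : List (Fin n)) :
    (l.map fun i => ι QQ (Pi.single i (1:ℝ))).prod ∈ evenOdd QQ (l.length : ZMod 2) := by
  induction l with
  | nil => simpa using SetLike.GradedOne.one_mem (A := evenOdd QQ)
  | cons a l ih =>
    rw [List.map_cons, List.prod_cons, List.length_cons, Nat.cast_succ, add_comm]
    exact SetLike.GradedMul.mul_mem (ι_mem_evenOdd_one _ _) ih

theorem anti_notMem (i : Fin n) (l : List (Fin n)) (h : i ∉ l) :
    ι QQ (Pi.single i (1:ℝ)) * (l.map fun i => ι QQ (Pi.single i (1:ℝ))).prod =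
    (-1 : ℝ) ^ l.length •
      ((l.map fun i => ι QQ (Pi.single i (1:ℝ))).prod * ι QQ (Pi.single i (1:ℝ))) := by
  induction l with
  | nil => simp
  | cons a l ih =>
    simp only [List.mem_cons, not_or] at h
    rw [List.map_cons, List.prod_cons, List.length_cons, ← mul_assoc,
      ι_mul_ι_comm_of_isOrtho (ortho w h.1), neg_mul, mul_assoc, ih h.2, pow_succ]
    simp [mul_assoc]

theorem anti_mem (i : Fin n) (l : List (Fin n)) (h : i ∈ l) (hl : l.Nodup) :
    ι QQ (Pi.single i (1:ℝ)) * (l.map fun i => ι QQ (Pi.single i (1:ℝ))).prod =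
    -((-1 : ℝ) ^ l.length •
      ((l.map fun i => ι QQ (Pi.single i (1:ℝ))).prod * ι QQ (Pi.single i (1:ℝ)))) := by
  induction l with
  | nil => simp at h
  | cons a l ih =>
    rw [List.nodup_cons] at hl
    by_cases hia : i = a
    · subst hia
      rw [List.map_cons, List.prod_cons, List.length_cons, pow_succ, mul_assoc,
        anti_notMem w i l hl.1]
      simp
    · have h' : i ∈ l := by simpa [hia] using h
      rw [List.map_cons, List.prod_cons, List.length_cons, ← mul_assoc,
        ι_mul_ι_comm_of_isOrtho (ortho w hia), neg_mul, mul_assoc, ih h' hl.2, pow_succ]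
      simp [mul_assoc]

theorem vol_even (hn : Even n) : volumeElem w ∈ evenOdd QQ 0 := by
  have := prod_mem w (List.finRange n)
  rw [List.length_finRange, (ZMod.natCast_eq_zero_iff_even).2 hn] at this
  exact this

theorem vol_anti (hn : Even n) (m : Fin n → ℝ) :
    ι QQ m * volumeElem w = -(volumeElem w * ι QQ m) := by
  have key : LinearMap.mulRight ℝ (volumeElem w) ∘ₗ ι QQ
      = -(LinearMap.mulLeft ℝ (volumeElem w) ∘ₗ ι QQ) := by
    apply LinearMap.pi_ext'
    intro i
    apply LinearMap.ext_ring
    have := anti_mem w i (List.finRange n) (List.mem_finRange i) (List.nodup_finRange n)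
    rw [List.length_finRange, hn.neg_one_pow, one_smul] at this
    exact this
  exact DFunLike.congr_fun key m

end vol

/-- the isometry -/
noncomputable def isom {n₁ n₂ : ℕ} (w₁ : Fin n₁ → ℝ) (w₂ : Fin n₂ → ℝ) :
    (QuadraticMap.weightedSumSquares ℝ (Sum.elim w₁ w₂ ∘ finSumFinEquiv.symm)).IsometryEquiv
      ((QuadraticMap.weightedSumSquares ℝ w₁).prod (QuadraticMap.weightedSumSquares ℝ w₂)) where
  toLinearEquiv := (LinearEquiv.funCongrLeft ℝ ℝ finSumFinEquiv).trans
    (LinearEquiv.sumArrowLequivProdArrow (Fin n₁) (Fin n₂) ℝ ℝ)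
  map_app' m := by
    simp only [QuadraticMap.prod_apply, QuadraticMap.weightedSumSquares_apply]
    rw [← finSumFinEquiv.sum_comp (fun i => (Sum.elim w₁ w₂ ∘ finSumFinEquiv.symm) i • (m i * m i)),
      Fintype.sum_sum_type]
    simp [LinearEquiv.funCongrLeft_apply, LinearMap.funLeft_apply]

end KaroubiPos

/-- Karoubi's theorem, positive case: if `n₁` is even and the volume element of
`Clℝ(w₁)` squares to `1`, then `Clℝ(w₁ ⊕ w₂) ≅ Clℝ(w₁) ⊗[ℝ] Clℝ(w₂)`. -/
theorem cliffordAlgebra_sum_of_positive (n₁ n₂ : ℕ) (w₁ : Fin n₁ → ℝ) (w₂ : Fin n₂ → ℝ)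
    (hw₁ : ∀ i, w₁ i = 1 ∨ w₁ i = -1) (hw₂ : ∀ i, w₂ i = 1 ∨ w₂ i = -1)
    (hn₁ : Even n₁) (hω : volumeElem w₁ ^ 2 = 1) :
    Nonempty
      (CliffordAlgebra
          (QuadraticMap.weightedSumSquares ℝ (Sum.elim w₁ w₂ ∘ finSumFinEquiv.symm)) ≃ₐ[ℝ]
        CliffordAlgebra (QuadraticMap.weightedSumSquares ℝ w₁) ⊗[ℝ]
          CliffordAlgebra (QuadraticMap.weightedSumSquares ℝ w₂)) := by
  obtain ⟨e⟩ := KaroubiPos.general (QuadraticMap.weightedSumSquares ℝ w₁)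
    (QuadraticMap.weightedSumSquares ℝ w₂) (volumeElem w₁) (by rw [← sq, hω])
    (KaroubiPos.vol_even w₁ hn₁) (KaroubiPos.vol_anti w₁ hn₁)
  exact ⟨(equivOfIsometry (KaroubiPos.isom w₁ w₂)).trans e⟩
end

section
/- Let n₁, n₂ be natural numbers and let w₁ : Fin n₁ → ℝ and w₂ : Fin n₂ → ℝ take only the values +1 and −1. Suppose n₁ is even and the volume element ω₁ = e₁e₂⋯e_{n₁} of Clℝ(w₁) satisfies ω₁² = −1 (i.e. Clℝ(w₁) is a negative Clifford algebra). Then the Clifford algebra Clℝ(Sum.elim w₁ w₂ ∘ finSumFinEquiv.symm) on Fin (n₁ + n₂) → ℝ is isomorphic as an ℝ-algebra to the tensor product Clℝ(w₁) ⊗[ℝ] Clℝ(−w₂), where −w₂ is the function i ↦ −(w₂ i). -/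
open CliffordAlgebra TensorProduct

namespace KaroubiNeg

theorem prod_map_mul_of_eps {A ι : Type*} [Ring A] [Algebra ℝ A] (f : ι → A) (ε : ι → ℝ) (x : A)
    (h : ∀ i, f i * x = ε i • (x * f i)) (l : List ι) :
    (l.map f).prod * x = (l.map ε).prod • (x * (l.map f).prod) := by
  induction l with
  | nil => simp
  | cons a l ih =>
    simp only [List.map_cons, List.prod_cons]
    rw [mul_assoc, ih, mul_smul_comm, ← mul_assoc, h, smul_mul_assoc, smul_smul, mul_assoc,
      mul_comm (ε a)]

section General
variable {M₁ M₂ : Type*} [AddCommGroup M₁] [Module ℝ M₁] [AddCommGroup M₂] [Module ℝ M₂]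
variable (Q₁ : QuadraticForm ℝ M₁) (Q₂ Q₂' : QuadraticForm ℝ M₂)

theorem general (hQ : ∀ m, Q₂' m = - Q₂ m) (ω : CliffordAlgebra Q₁) (hω : ω * ω = -1)
    (hanti : ∀ m, ω * ι Q₁ m = - (ι Q₁ m * ω))
    (hcomm : ∀ m : M₂, map (QuadraticMap.Isometry.inl Q₁ Q₂) ω * ι (Q₁.prod Q₂) (0, m) =
      ι (Q₁.prod Q₂) (0, m) * map (QuadraticMap.Isometry.inl Q₁ Q₂) ω) :
    Nonempty (CliffordAlgebra (Q₁.prod Q₂) ≃ₐ[ℝ] CliffordAlgebra Q₁ ⊗[ℝ] CliffordAlgebra Q₂') := by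
  set Ω := map (QuadraticMap.Isometry.inl Q₁ Q₂) ω with hΩ
  have hΩ2 : Ω * Ω = -1 := by rw [hΩ, ← map_mul, hω]; simp
  have hΩa : ∀ m : M₁, Ω * ι (Q₁.prod Q₂) (m, 0) = - (ι (Q₁.prod Q₂) (m, 0) * Ω) := by
    intro m
    have := congrArg (map (QuadraticMap.Isometry.inl Q₁ Q₂)) (hanti m)
    simpa using this
  let F₀ : M₁ × M₂ →ₗ[ℝ] CliffordAlgebra Q₁ ⊗[ℝ] CliffordAlgebra Q₂' :=
    LinearMap.coprod
      (Algebra.TensorProduct.includeLeft.toLinearMap ∘ₗ ι Q₁)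
      (TensorProduct.mk ℝ _ _ ω ∘ₗ ι Q₂')
  have F₀_apply : ∀ m : M₁ × M₂, F₀ m = ι Q₁ m.1 ⊗ₜ 1 + ω ⊗ₜ ι Q₂' m.2 := fun m => by
    simp [F₀]
  let F : CliffordAlgebra (Q₁.prod Q₂) →ₐ[ℝ] CliffordAlgebra Q₁ ⊗[ℝ] CliffordAlgebra Q₂' :=
    lift _ ⟨F₀, fun m => by
      rw [F₀_apply]
      simp only [add_mul, mul_add, Algebra.TensorProduct.tmul_mul_tmul, ι_sq_scalar, hω, hanti,
        one_mul, mul_one, hQ, QuadraticMap.prod_apply, map_add, map_neg, TensorProduct.neg_tmul,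
        TensorProduct.tmul_neg]
      simp only [Algebra.algebraMap_eq_smul_one, TensorProduct.tmul_smul, ← TensorProduct.smul_tmul',
        Algebra.TensorProduct.one_def]
      abel⟩
  let G₂ : CliffordAlgebra Q₂' →ₐ[ℝ] CliffordAlgebra (Q₁.prod Q₂) :=
    lift _ ⟨-(LinearMap.mulLeft ℝ Ω ∘ₗ ι (Q₁.prod Q₂) ∘ₗ LinearMap.inr ℝ M₁ M₂), fun m => by
      simp only [LinearMap.neg_apply, LinearMap.comp_apply, LinearMap.mulLeft_apply,
        LinearMap.inr_apply, neg_mul_neg]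
      rw [mul_assoc, ← mul_assoc _ Ω, ← hcomm, mul_assoc Ω, ι_sq_scalar, ← mul_assoc, hΩ2, hQ]
      simp⟩
  have G₂_ι : ∀ m, G₂ (ι _ m) = -(Ω * ι _ (0, m)) := fun m => by simp [G₂]
  have F_ι : ∀ m, F (ι _ m) = ι Q₁ m.1 ⊗ₜ 1 + ω ⊗ₜ ι Q₂' m.2 := fun m => by
    simp only [F, lift_ι_apply, F₀_apply]
  have FG₁ : ∀ x, F (map (QuadraticMap.Isometry.inl Q₁ Q₂) x) = x ⊗ₜ 1 := by
    intro x
    have : F.comp (map (QuadraticMap.Isometry.inl Q₁ Q₂)) = Algebra.TensorProduct.includeLeft := by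
      ext m
      simp [F_ι]
    exact DFunLike.congr_fun this x
  have hc : ∀ x y, Commute (map (QuadraticMap.Isometry.inl Q₁ Q₂) x) (G₂ y) := by
    intro x y
    induction y using CliffordAlgebra.induction with
    | algebraMap r => rw [AlgHom.commutes]; exact (Algebra.commutes _ _).symm
    | add a b ha hb => rw [map_add]; exact ha.add_right hb
    | mul a b ha hb => rw [map_mul]; exact ha.mul_right hb
    | ι m₂ =>
      induction x using CliffordAlgebra.induction with
      | algebraMap r => rw [AlgHom.commutes]; exact Algebra.commutes _ _
      | add a b ha hb => rw [map_add]; exact ha.add_left hb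
      | mul a b ha hb => rw [map_mul]; exact ha.mul_left hb
      | ι m₁ =>
        rw [G₂_ι, map_apply_ι]
        refine Commute.neg_right ?_
        have h1 : ι (Q₁.prod Q₂) (m₁, 0) * ι _ (0, m₂) = - (ι _ (0, m₂) * ι _ (m₁, 0)) := by
          apply ι_mul_ι_comm_of_isOrtho
          simp [QuadraticMap.IsOrtho]
        change ι _ (m₁, 0) * (Ω * ι _ (0, m₂)) = Ω * ι _ (0, m₂) * ι _ (m₁, 0)
        rw [mul_assoc Ω, ← neg_eq_iff_eq_neg.mpr h1, mul_neg, ← mul_assoc, ← mul_assoc, hΩa,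
          neg_mul, neg_neg]
  let G := Algebra.TensorProduct.lift (map (QuadraticMap.Isometry.inl Q₁ Q₂)) G₂ hc
  refine ⟨AlgEquiv.ofAlgHom F G ?_ ?_⟩
  · ext m
    · simp [G, F_ι]
    · simp [G, G₂_ι, F_ι, hΩ, FG₁, hω, TensorProduct.neg_tmul]
  · ext m
    · simp [G, F_ι]
    · simp [G, F_ι, G₂_ι, ← hΩ, ← mul_assoc, hΩ2]

end General

theorem isometry (n₁ n₂ : ℕ) (w₁ : Fin n₁ → ℝ) (w₂ : Fin n₂ → ℝ) :
    Nonempty ((QuadraticMap.weightedSumSquares ℝ (Sum.elim w₁ w₂ ∘ finSumFinEquiv.symm)).IsometryEquiv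
      ((QuadraticMap.weightedSumSquares ℝ w₁).prod (QuadraticMap.weightedSumSquares ℝ w₂))) := by
  refine ⟨⟨(LinearEquiv.funCongrLeft ℝ ℝ finSumFinEquiv).trans
    (LinearEquiv.sumArrowLequivProdArrow _ _ ℝ ℝ), fun x => ?_⟩⟩
  simp [QuadraticMap.weightedSumSquares_apply, Fin.sum_univ_add, LinearEquiv.funCongrLeft,
    LinearMap.funLeft]

theorem ortho_single {n : ℕ} (w : Fin n → ℝ) {i j : Fin n} (h : i ≠ j) :
    (QuadraticMap.weightedSumSquares ℝ w).IsOrtho (Pi.single i 1) (Pi.single j 1) := by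
  simp only [QuadraticMap.IsOrtho, QuadraticMap.weightedSumSquares_apply, Pi.add_apply]
  rw [← Finset.sum_add_distrib]
  refine Finset.sum_congr rfl fun k _ => ?_
  by_cases hi : k = i
  · subst hi; simp [h]
  · simp [hi]

theorem vol_anti {n : ℕ} (w : Fin n → ℝ) (hn : Even n) (m : Fin n → ℝ) :
    volumeElem w * ι _ m = - (ι _ m * volumeElem w) := by
  have key : ∀ j, volumeElem w * ι _ (Pi.single j 1) = - (ι _ (Pi.single j 1) * volumeElem w) := by
    intro j
    have := prod_map_mul_of_eps
      (fun i => ι (QuadraticMap.weightedSumSquares ℝ w) (Pi.single i 1))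
      (fun i => -1 * if i = j then (-1 : ℝ) else 1) (ι _ (Pi.single j 1)) (fun i => by
        by_cases h : i = j
        · subst h; simp
        · simp only [h, if_false, mul_one, neg_smul, one_smul]
          exact ι_mul_ι_comm_of_isOrtho (ortho_single w h)) (List.finRange n)
    rw [← Fin.prod_univ_def, Finset.prod_mul_distrib] at this
    simpa [hn.neg_one_pow, volumeElem] using this
  have : LinearMap.mulLeft ℝ (volumeElem w) ∘ₗ ι (QuadraticMap.weightedSumSquares ℝ w) =
      -(LinearMap.mulRight ℝ (volumeElem w) ∘ₗ ι (QuadraticMap.weightedSumSquares ℝ w)) := by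
    refine LinearMap.pi_ext' fun j => ?_
    ext
    simpa using key j
  simpa using DFunLike.congr_fun this m

theorem vol_comm {n : ℕ} {M₂ : Type*} [AddCommGroup M₂] [Module ℝ M₂] (w : Fin n → ℝ)
    (Q₂ : QuadraticForm ℝ M₂) (hn : Even n) (m : M₂) :
    map (QuadraticMap.Isometry.inl (QuadraticMap.weightedSumSquares ℝ w) Q₂) (volumeElem w) *
      ι ((QuadraticMap.weightedSumSquares ℝ w).prod Q₂) (0, m) =
    ι ((QuadraticMap.weightedSumSquares ℝ w).prod Q₂) (0, m) *
      map (QuadraticMap.Isometry.inl (QuadraticMap.weightedSumSquares ℝ w) Q₂) (volumeElem w) := by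
  have := prod_map_mul_of_eps
      (fun i => ι ((QuadraticMap.weightedSumSquares ℝ w).prod Q₂) (Pi.single i 1, 0))
      (fun i : Fin n => (-1 : ℝ)) (ι _ (0, m)) (fun i => by
        rw [neg_smul, one_smul]
        apply ι_mul_ι_comm_of_isOrtho
        simp [QuadraticMap.IsOrtho]) (List.finRange n)
  rw [← Fin.prod_univ_def] at this
  simpa [hn.neg_one_pow, volumeElem, map_list_prod, Function.comp_def] using this

end KaroubiNeg

/-- Karoubi's theorem, negative case: if `n₁` is even and the volume element of
`Clℝ(w₁)` squares to `-1`, then `Clℝ(w₁ ⊕ w₂) ≅ Clℝ(w₁) ⊗[ℝ] Clℝ(-w₂)`. -/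
theorem cliffordAlgebra_sum_of_negative (n₁ n₂ : ℕ) (w₁ : Fin n₁ → ℝ) (w₂ : Fin n₂ → ℝ)
    (hw₁ : ∀ i, w₁ i = 1 ∨ w₁ i = -1) (hw₂ : ∀ i, w₂ i = 1 ∨ w₂ i = -1)
    (hn₁ : Even n₁) (hω : volumeElem w₁ ^ 2 = -1) :
    Nonempty
      (CliffordAlgebra
          (QuadraticMap.weightedSumSquares ℝ (Sum.elim w₁ w₂ ∘ finSumFinEquiv.symm)) ≃ₐ[ℝ]
        CliffordAlgebra (QuadraticMap.weightedSumSquares ℝ w₁) ⊗[ℝ]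
          CliffordAlgebra (QuadraticMap.weightedSumSquares ℝ (fun i => -(w₂ i)))) := by
  obtain ⟨e⟩ := KaroubiNeg.isometry n₁ n₂ w₁ w₂
  obtain ⟨f⟩ := KaroubiNeg.general (QuadraticMap.weightedSumSquares ℝ w₁)
    (QuadraticMap.weightedSumSquares ℝ w₂) (QuadraticMap.weightedSumSquares ℝ (fun i => -(w₂ i)))
    (fun m => by simp [QuadraticMap.weightedSumSquares_apply]) (volumeElem w₁)
    (by rw [← sq, hω]) (KaroubiNeg.vol_anti w₁ hn₁) (KaroubiNeg.vol_comm w₁ _ hn₁)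
  exact ⟨(equivOfIsometry e).trans f⟩
end

section
/- For all natural numbers n, m and l with l ≤ n, the Clifford algebra Clℝ(w(l+m, n+2m)) is isomorphic as an ℝ-algebra to the matrix algebra Matrix (Fin (2^m)) (Fin (2^m)) (Clℝ(w(l, n))) of 2^m × 2^m matrices over the Clifford algebra Clℝ(w(l, n)). (This is the paper's Theorem 2: the algebra ^{l+m}K_{n+2m} is isomorphic to M_{2^m}(^{l}K_n), for K = ℝ.) -/
/-- The sign weight function `w(l, n) : Fin n → ℝ`: `-1` on the first `l` indices,
`+1` on the rest. -/
def signWeights (l n : ℕ) : Fin n → ℝ := fun i => if (i : ℕ) < l then -1 else 1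

open CliffordAlgebra in
/-- hyperbolic plane `(x, y) ↦ x * y` added to `Q` -/
noncomputable def hypQ {V : Type} [AddCommGroup V] [Module ℝ V] (Q : QuadraticForm ℝ V) :
    QuadraticForm ℝ (V × ℝ × ℝ) :=
  Q.prod (QuadraticMap.linMulLin (LinearMap.fst ℝ ℝ ℝ) (LinearMap.snd ℝ ℝ ℝ))

section
variable {V : Type} [AddCommGroup V] [Module ℝ V] (Q : QuadraticForm ℝ V)

open CliffordAlgebra

lemma hypQ_apply (v : V) (x y : ℝ) : hypQ Q (v, x, y) = Q v + x * y := by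
  simp [hypQ]

/-- linear map into matrices -/
noncomputable def fwdLin : (V × ℝ × ℝ) →ₗ[ℝ] Matrix (Fin 2) (Fin 2) (CliffordAlgebra Q) where
  toFun p := !![ι Q p.1, algebraMap ℝ _ p.2.1; algebraMap ℝ _ p.2.2, - ι Q p.1]
  map_add' p q := by
    ext i j; fin_cases i <;> fin_cases j <;> simp [add_comm]
  map_smul' r p := by
    ext i j; fin_cases i <;> fin_cases j <;> simp [Algebra.smul_def]

/-- forward map -/
noncomputable def fwd : CliffordAlgebra (hypQ Q) →ₐ[ℝ] Matrix (Fin 2) (Fin 2) (CliffordAlgebra Q) :=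
  lift _ ⟨fwdLin Q, by
    rintro ⟨v, x, y⟩
    rw [hypQ_apply]
    have h := Algebra.commutes (A := CliffordAlgebra Q) x (ι Q v)
    have h' := Algebra.commutes (A := CliffordAlgebra Q) y (ι Q v)
    have h'' := Algebra.commutes (A := CliffordAlgebra Q) x (algebraMap ℝ _ y)
    ext i j; fin_cases i <;> fin_cases j <;>
      simp [fwdLin, Matrix.mul_apply, Fin.sum_univ_two, Matrix.algebraMap_matrix_apply, h, h', h'',
        add_comm]⟩

lemma fwd_ι (v : V) (x y : ℝ) : fwd Q (ι _ (v, x, y)) =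
    !![ι Q v, algebraMap ℝ _ x; algebraMap ℝ _ y, - ι Q v] := by
  simp [fwd, fwdLin]

/-- matrix lift -/
noncomputable def matLift {C A : Type} [Ring C] [Algebra ℝ C] [Ring A] [Algebra ℝ A]
    (j : C →ₐ[ℝ] A) (E F : A) (hE : E * E = 0) (hF : F * F = 0) (hEF : E * F + F * E = 1)
    (cE : ∀ c, E * j c = j c * E) (cF : ∀ c, F * j c = j c * F) :
    Matrix (Fin 2) (Fin 2) C →ₐ[ℝ] A :=
  AlgHom.ofLinearMap
    { toFun := fun M => j (M 0 0) * (E * F) + j (M 0 1) * E + j (M 1 0) * F + j (M 1 1) * (F * E)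
      map_add' := fun M N => by simp [add_mul]; abel
      map_smul' := fun r M => by simp [smul_add] }
    (by simp [hEF])
    (by
      have h1 : E * (F * E) = E := by
        have := congrArg (E * ·) hEF
        simpa [mul_add, ← mul_assoc, hE] using this
      have h2 : F * (E * F) = F := by
        have := congrArg (F * ·) hEF
        simpa [mul_add, ← mul_assoc, hF] using this
      have hE' : ∀ a, E * (E * a) = 0 := fun a => by rw [← mul_assoc, hE, zero_mul]
      have hF' : ∀ a, F * (F * a) = 0 := fun a => by rw [← mul_assoc, hF, zero_mul]
      have cE' : ∀ c a, E * (j c * a) = j c * (E * a) := fun c a => by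
        rw [← mul_assoc, cE, mul_assoc]
      have cF' : ∀ c a, F * (j c * a) = j c * (F * a) := fun c a => by
        rw [← mul_assoc, cF, mul_assoc]
      intro M N
      simp only [LinearMap.coe_mk, AddHom.coe_mk, Matrix.mul_apply, Fin.sum_univ_two, map_add,
        map_mul, add_mul, mul_add, mul_assoc, cE', cF', hE, hF, hE', hF', h1, h2, mul_zero]
      abel)

noncomputable abbrev eE : CliffordAlgebra (hypQ Q) := ι (hypQ Q) (0, 1, 0)
noncomputable abbrev eF : CliffordAlgebra (hypQ Q) := ι (hypQ Q) (0, 0, 1)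

lemma eE_sq : eE Q * eE Q = 0 := by simp [eE, ι_sq_scalar, hypQ_apply]
lemma eF_sq : eF Q * eF Q = 0 := by simp [eF, ι_sq_scalar, hypQ_apply]
lemma eEF : eE Q * eF Q + eF Q * eE Q = 1 := by
  rw [ι_mul_ι_add_swap]; simp [QuadraticMap.polar, hypQ_apply]
lemma eEv (v : V) : eE Q * ι (hypQ Q) (v, 0, 0) = - (ι (hypQ Q) (v, 0, 0) * eE Q) := by
  rw [eq_neg_iff_add_eq_zero, ι_mul_ι_add_swap]; simp [QuadraticMap.polar, hypQ_apply]
lemma eFv (v : V) : eF Q * ι (hypQ Q) (v, 0, 0) = - (ι (hypQ Q) (v, 0, 0) * eF Q) := by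
  rw [eq_neg_iff_add_eq_zero, ι_mul_ι_add_swap]; simp [QuadraticMap.polar, hypQ_apply]

lemma eEFE : eE Q * (eF Q * eE Q) = eE Q := by
  have := congrArg (eE Q * ·) (eEF Q)
  simpa only [mul_add, ← mul_assoc, eE_sq, zero_mul, zero_add, mul_one] using this
lemma eFEF : eF Q * (eE Q * eF Q) = eF Q := by
  have := congrArg (eF Q * ·) (eEF Q)
  simpa only [mul_add, ← mul_assoc, eF_sq, zero_mul, add_zero, mul_one] using this

/-- grading element -/
noncomputable def eG : CliffordAlgebra (hypQ Q) := eE Q * eF Q - eF Q * eE Q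

lemma eG_sq : eG Q * eG Q = 1 := by
  have hE' : ∀ a, eE Q * (eE Q * a) = 0 := fun a => by rw [← mul_assoc, eE_sq, zero_mul]
  have hF' : ∀ a, eF Q * (eF Q * a) = 0 := fun a => by rw [← mul_assoc, eF_sq, zero_mul]
  rw [← eEF Q, eG]
  simp only [sub_mul, mul_sub, mul_assoc, hE', hF', eEFE, eFEF, mul_zero]
  abel

lemma eG_v (v : V) : eG Q * ι (hypQ Q) (v, 0, 0) = ι (hypQ Q) (v, 0, 0) * eG Q := by
  simp only [eG, sub_mul, mul_sub, mul_assoc, eEv, eFv, mul_neg]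
  simp only [← mul_assoc, eEv, eFv, neg_mul, neg_neg]

lemma eG_E : eG Q * eE Q = eE Q := by
  simp only [eG, sub_mul, mul_assoc, eE_sq, eEFE, mul_zero, sub_zero]
lemma eE_G : eE Q * eG Q = - eE Q := by
  simp only [eG, mul_sub, ← mul_assoc, eE_sq, zero_mul, zero_sub]
  rw [mul_assoc, eEFE]
lemma eG_F : eG Q * eF Q = - eF Q := by
  simp only [eG, sub_mul, mul_assoc, eF_sq, eFEF, mul_zero, zero_sub]
lemma eF_G : eF Q * eG Q = eF Q := by
  simp only [eG, mul_sub, ← mul_assoc, eF_sq, zero_mul, sub_zero]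
  rw [mul_assoc, eFEF]

/-- the commuting copy of the small Clifford algebra -/
noncomputable def jj : CliffordAlgebra Q →ₐ[ℝ] CliffordAlgebra (hypQ Q) :=
  lift Q ⟨(LinearMap.mulRight ℝ (eG Q)) ∘ₗ ι (hypQ Q) ∘ₗ LinearMap.inl ℝ V (ℝ × ℝ), by
    intro v
    have : ι (hypQ Q) (v, 0, 0) * eG Q * (ι (hypQ Q) (v, 0, 0) * eG Q)
        = algebraMap ℝ _ (Q v) := by
      rw [mul_assoc, ← mul_assoc (eG Q), eG_v, mul_assoc _ (eG Q), eG_sq, mul_one, ι_sq_scalar,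
        hypQ_apply]
      simp
    simpa only [LinearMap.comp_apply, LinearMap.mulRight_apply, LinearMap.inl_apply, Prod.zero_eq_mk] using this⟩

lemma jj_ι (v : V) : jj Q (ι Q v) = ι (hypQ Q) (v, 0, 0) * eG Q := by
  exact lift_ι_apply _ _ v

lemma comm_of_ι (a : CliffordAlgebra (hypQ Q))
    (h : ∀ v, a * jj Q (ι Q v) = jj Q (ι Q v) * a) (c : CliffordAlgebra Q) :
    a * jj Q c = jj Q c * a := by
  induction c using CliffordAlgebra.induction with
  | algebraMap r => rw [AlgHom.commutes, Algebra.commutes]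
  | ι v => exact h v
  | mul x y hx hy => rw [map_mul, ← mul_assoc, hx, mul_assoc, hy, mul_assoc]
  | add x y hx hy => rw [map_add, mul_add, add_mul, hx, hy]

lemma commE (c : CliffordAlgebra Q) : eE Q * jj Q c = jj Q c * eE Q := by
  refine comm_of_ι Q _ (fun v => ?_) c
  rw [jj_ι, mul_assoc, eG_E, ← mul_assoc, eEv, neg_mul, mul_assoc, eE_G, mul_neg, neg_neg]
lemma commF (c : CliffordAlgebra Q) : eF Q * jj Q c = jj Q c * eF Q := by
  refine comm_of_ι Q _ (fun v => ?_) c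
  rw [jj_ι, mul_assoc, eG_F, ← mul_assoc, eFv, neg_mul, mul_assoc, eF_G, mul_neg]

/-- backward map -/
noncomputable def bwd : Matrix (Fin 2) (Fin 2) (CliffordAlgebra Q) →ₐ[ℝ] CliffordAlgebra (hypQ Q) :=
  matLift (jj Q) (eE Q) (eF Q) (eE_sq Q) (eF_sq Q) (eEF Q) (commE Q) (commF Q)

lemma bwd_apply (M : Matrix (Fin 2) (Fin 2) (CliffordAlgebra Q)) : bwd Q M =
    jj Q (M 0 0) * (eE Q * eF Q) + jj Q (M 0 1) * eE Q + jj Q (M 1 0) * eF Q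
      + jj Q (M 1 1) * (eF Q * eE Q) := rfl

lemma bwd_fwd : (bwd Q).comp (fwd Q) = AlgHom.id ℝ _ := by
  apply CliffordAlgebra.hom_ext
  apply LinearMap.ext
  rintro ⟨v, x, y⟩
  have key : ι (hypQ Q) (v, x, y) = ι (hypQ Q) (v, 0, 0) + x • eE Q + y • eF Q := by
    rw [eE, eF, ← map_smul, ← map_smul, ← map_add, ← map_add]
    simp
  have h2 : bwd Q (fwd Q (ι (hypQ Q) (v, x, y))) =
      ι (hypQ Q) (v, 0, 0) * (eG Q * (eE Q * eF Q - eF Q * eE Q)) + x • eE Q + y • eF Q := by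
    rw [fwd_ι, bwd_apply]
    simp only [Matrix.of_apply, Matrix.cons_val', Matrix.cons_val_zero, Matrix.cons_val_one,
      Matrix.cons_val_fin_one, map_neg, AlgHom.commutes, jj_ι, ← Algebra.smul_def]
    simp only [mul_sub, mul_assoc, neg_mul]
    abel
  have h3 : bwd Q (fwd Q (ι (hypQ Q) (v, x, y))) = ι (hypQ Q) (v, x, y) := by
    rw [h2, key, ← eG, eG_sq, mul_one]
  exact h3

lemma fwd_jj (c : CliffordAlgebra Q) : fwd Q (jj Q c) = !![c, 0; 0, c] := by
  induction c using CliffordAlgebra.induction with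
  | algebraMap r =>
    rw [AlgHom.commutes, AlgHom.commutes]
    ext i j; fin_cases i <;> fin_cases j <;> simp [Matrix.algebraMap_matrix_apply]
  | ι v =>
    rw [jj_ι, eG]
    simp only [map_mul, map_sub, fwd_ι]
    simp
  | mul x y hx hy => rw [map_mul, map_mul, hx, hy]; simp
  | add x y hx hy => rw [map_add, map_add, hx, hy]; simp

lemma fwd_bwd : (fwd Q).comp (bwd Q) = AlgHom.id ℝ _ := by
  apply AlgHom.ext
  intro M
  rw [AlgHom.comp_apply, bwd_apply]
  simp only [map_add, map_mul, fwd_jj, fwd_ι, AlgHom.id_apply]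
  ext i j; fin_cases i <;> fin_cases j <;> simp

noncomputable def hypEquiv :
    CliffordAlgebra (hypQ Q) ≃ₐ[ℝ] Matrix (Fin 2) (Fin 2) (CliffordAlgebra Q) :=
  AlgEquiv.ofAlgHom (fwd Q) (bwd Q) (fwd_bwd Q) (bwd_fwd Q)

end

/-- splitting off first and last coordinates -/
noncomputable def splitLin (n : ℕ) : (Fin (n + 2) → ℝ) ≃ₗ[ℝ] ((Fin n → ℝ) × ℝ × ℝ) where
  toFun f := (fun i => f i.castSucc.succ, f (Fin.last _) + f 0, f (Fin.last _) - f 0)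
  map_add' f g := by ext <;> simp <;> ring
  map_smul' r f := by ext <;> simp <;> ring
  invFun p := Fin.cons ((p.2.1 - p.2.2) / 2) (Fin.snoc p.1 ((p.2.1 + p.2.2) / 2) : Fin (n + 1) → ℝ)
  left_inv f := by
    funext i
    refine Fin.cases ?_ (fun i => ?_) i
    · simp
    · refine Fin.lastCases ?_ (fun i => ?_) i
      · simp
      · simp
  right_inv p := by
    obtain ⟨v, x, y⟩ := p
    rw [← Fin.succ_last]
    simp only [Fin.cons_succ, Fin.cons_zero, Fin.snoc_last, Fin.snoc_castSucc]
    ext <;> simp <;> ring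

lemma splitLin_isom (n l : ℕ) (hl : l ≤ n) (f : Fin (n + 2) → ℝ) :
    hypQ (QuadraticMap.weightedSumSquares ℝ (signWeights l n)) (splitLin n f) =
      QuadraticMap.weightedSumSquares ℝ (signWeights (l + 1) (n + 2)) f := by
  change hypQ _ (_, _, _) = _
  rw [hypQ_apply, QuadraticMap.weightedSumSquares_apply, QuadraticMap.weightedSumSquares_apply,
    Fin.sum_univ_succ, Fin.sum_univ_castSucc]
  have : ¬ n < l := by omega
  simp [signWeights, this]
  ring

theorem cl_step (n l : ℕ) (hl : l ≤ n) :
    Nonempty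
      (CliffordAlgebra (QuadraticMap.weightedSumSquares ℝ (signWeights (l + 1) (n + 2)))
        ≃ₐ[ℝ] Matrix (Fin 2) (Fin 2)
          (CliffordAlgebra (QuadraticMap.weightedSumSquares ℝ (signWeights l n)))) :=
  ⟨(CliffordAlgebra.equivOfIsometry
    { splitLin n with map_app' := splitLin_isom n l hl }).trans (hypEquiv _)⟩

/-- one by one matrices -/
def oneMat (A : Type) [Ring A] [Algebra ℝ A] : A ≃ₐ[ℝ] Matrix (Fin 1) (Fin 1) A where
  toFun a := Matrix.of fun _ _ => a
  invFun M := M 0 0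
  left_inv a := rfl
  right_inv M := by ext i j; fin_cases i; fin_cases j; rfl
  map_mul' a b := by ext i j; simp [Matrix.mul_apply]
  map_add' a b := by ext i j; simp
  commutes' r := by ext i j; fin_cases i; fin_cases j; simp [Matrix.algebraMap_matrix_apply]

/-- Paper's Theorem 2 (for `K = ℝ`): `^{l+m}K_{n+2m} ≅ M_{2^m}(^{l}K_n)`. -/
theorem cliffordAlgebra_signWeights_add_two_mul_isomorphic_matrix (n m l : ℕ) (hl : l ≤ n) :
    Nonempty
      (CliffordAlgebra (QuadraticMap.weightedSumSquares ℝ (signWeights (l + m) (n + 2 * m)))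
        ≃ₐ[ℝ] Matrix (Fin (2 ^ m)) (Fin (2 ^ m))
          (CliffordAlgebra (QuadraticMap.weightedSumSquares ℝ (signWeights l n)))) := by
  induction m with
  | zero =>
    exact ⟨oneMat _⟩
  | succ m ih =>
    obtain ⟨e⟩ := ih
    obtain ⟨s⟩ := cl_step (n + 2 * m) (l + m) (by omega)
    exact ⟨s.trans (e.mapMatrix.trans ((Matrix.compAlgEquiv _ _ _ _).trans
      (Matrix.reindexAlgEquiv ℝ _ (Fintype.equivFinOfCardEq (by simp [pow_succ, mul_comm])))))⟩
end

section
/- For every natural number n, the complex Clifford algebra Cℂ(n+2) is isomorphic as a ℂ-algebra to the matrix algebra Matrix (Fin 2) (Fin 2) (Cℂ(n)) of 2 × 2 matrices with entries in Cℂ(n). (Paper's Theorem 3.) -/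
/-- `Cℂ(n)`: the Clifford algebra over `ℂ` of the sum-of-squares form on `Fin n → ℂ`. -/
noncomputable abbrev ComplexClifford (n : ℕ) :=
  CliffordAlgebra (QuadraticMap.weightedSumSquares ℂ (fun _ : Fin n => (1 : ℂ)))

theorem cc_finrank (n : ℕ) : Module.Finite ℂ (ComplexClifford n) ∧
    Module.finrank ℂ (ComplexClifford n) = 2 ^ n := by
  let b : Module.Basis (Finset (Fin n)) ℂ (ExteriorAlgebra ℂ (Fin n → ℂ)) :=
    (Pi.basisFun ℂ (Fin n)).ExteriorAlgebra
  let e := CliffordAlgebra.equivExterior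
    (QuadraticMap.weightedSumSquares ℂ (fun _ : Fin n => (1 : ℂ)))
  let b' := b.map e.symm
  refine ⟨Module.Finite.of_basis b', ?_⟩
  rw [Module.finrank_eq_card_basis b']
  simp

/-- The generating linear map. -/
noncomputable def ccLin (n : ℕ) :
    (Fin (n + 2) → ℂ) →ₗ[ℂ] Matrix (Fin 2) (Fin 2) (ComplexClifford n) where
  toFun x :=
    !![CliffordAlgebra.ι _ (fun i : Fin n => x i.succ.succ),
       algebraMap ℂ _ (x 0 - Complex.I * x 1);
       algebraMap ℂ _ (x 0 + Complex.I * x 1),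
       - CliffordAlgebra.ι _ (fun i : Fin n => x i.succ.succ)]
  map_add' x y := by
    have h : (fun i : Fin n => (x + y) i.succ.succ)
      = (fun i : Fin n => x i.succ.succ) + (fun i : Fin n => y i.succ.succ) := rfl
    rw [h]
    ext i j
    fin_cases i <;> fin_cases j <;> simp <;> abel_nf <;> simp [mul_add] <;> abel
  map_smul' c x := by
    have h : (fun i : Fin n => (c • x) i.succ.succ)
      = c • (fun i : Fin n => x i.succ.succ) := rfl
    rw [h]
    ext i j
    have h2 : ∀ d : ℂ, c • algebraMap ℂ (ComplexClifford n) d = algebraMap ℂ _ (c * d) := by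
      intro d
      rw [Algebra.smul_def, map_mul]
    fin_cases i <;> fin_cases j
    · simp
    · simp only [Matrix.smul_apply, RingHom.id_apply]
      refine Eq.trans ?_ (h2 _).symm
      change algebraMap ℂ _ (c * x 0 - Complex.I * (c * x 1)) = _
      congr 1; ring
    · simp only [Matrix.smul_apply, RingHom.id_apply]
      refine Eq.trans ?_ (h2 _).symm
      change algebraMap ℂ _ (c * x 0 + Complex.I * (c * x 1)) = _
      congr 1; ring
    · simp

theorem ccLin_sq (n : ℕ) (x : Fin (n + 2) → ℂ) :
    ccLin n x * ccLin n x = algebraMap ℂ _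
      (QuadraticMap.weightedSumSquares ℂ (fun _ : Fin (n + 2) => (1 : ℂ)) x) := by
  have hQ : QuadraticMap.weightedSumSquares ℂ (fun _ : Fin (n + 2) => (1 : ℂ)) x
      = (x 0 - Complex.I * x 1) * (x 0 + Complex.I * x 1)
        + QuadraticMap.weightedSumSquares ℂ (fun _ : Fin n => (1 : ℂ))
          (fun i : Fin n => x i.succ.succ) := by
    simp only [QuadraticMap.weightedSumSquares_apply, Fin.sum_univ_succ, one_smul]
    simp only [Fin.succ_zero_eq_one]
    linear_combination (x 1 * x 1) * Complex.I_mul_I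
  rw [hQ, Matrix.algebraMap_eq_diagonal]
  simp only [ccLin, LinearMap.coe_mk, AddHom.coe_mk]
  generalize x 0 - Complex.I * x 1 = p
  generalize x 0 + Complex.I * x 1 = q
  have h1 := CliffordAlgebra.ι_sq_scalar
    (QuadraticMap.weightedSumSquares ℂ (fun _ : Fin n => (1 : ℂ)))
    (fun i : Fin n => x i.succ.succ)
  ext i j
  fin_cases i <;> fin_cases j
  · simp [Matrix.mul_apply, h1]; abel
  · simp [Matrix.mul_apply, Algebra.commutes p]
  · simp [Matrix.mul_apply, Algebra.commutes q]
  · simp [Matrix.mul_apply, h1, ← map_mul, mul_comm]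

/-- The algebra map. -/
noncomputable def ccHom (n : ℕ) :
    ComplexClifford (n + 2) →ₐ[ℂ] Matrix (Fin 2) (Fin 2) (ComplexClifford n) :=
  CliffordAlgebra.lift _ ⟨ccLin n, ccLin_sq n⟩

theorem ccLin_mem (n : ℕ) (x : Fin (n + 2) → ℂ) : ccLin n x ∈ (ccHom n).range :=
  ⟨CliffordAlgebra.ι _ x, by simp [ccHom]⟩

theorem ccHom_surj (n : ℕ) : Function.Surjective (ccHom n) := by
  have hx : (!![0, 1; 1, 0] : Matrix (Fin 2) (Fin 2) (ComplexClifford n)) ∈ (ccHom n).range := by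
    convert ccLin_mem n (Pi.single 0 1) using 1
    have : (fun i : Fin n => (Pi.single 0 1 : Fin (n+2) → ℂ) i.succ.succ) = 0 := by
      ext i; simp
    simp only [ccLin, LinearMap.coe_mk, AddHom.coe_mk]
    rw [this]
    simp
  have hy : (!![0, -1; 1, 0] : Matrix (Fin 2) (Fin 2) (ComplexClifford n)) ∈ (ccHom n).range := by
    convert ccLin_mem n (Pi.single 1 (-Complex.I)) using 1
    have : (fun i : Fin n => (Pi.single 1 (-Complex.I) : Fin (n+2) → ℂ) i.succ.succ) = 0 := by
      ext i
      have : i.succ.succ ≠ (1 : Fin (n+2)) := by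
        intro h; simpa using congrArg Fin.val h
      simp [this]
    have h2 : algebraMap ℂ (ComplexClifford n) Complex.I * algebraMap ℂ _ Complex.I = -1 := by
      rw [← map_mul, Complex.I_mul_I]; simp
    simp only [ccLin, LinearMap.coe_mk, AddHom.coe_mk]
    rw [this]
    simp [h2]
  have hz : (!![1, 0; 0, -1] : Matrix (Fin 2) (Fin 2) (ComplexClifford n)) ∈ (ccHom n).range := by
    convert mul_mem hx hy using 1
    simp
  have h00 : (!![1, 0; 0, 0] : Matrix (Fin 2) (Fin 2) (ComplexClifford n)) ∈ (ccHom n).range := by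
    convert Subalgebra.smul_mem _ (add_mem (one_mem _) hz) (1/2 : ℂ) using 1
    ext i j
    fin_cases i <;> fin_cases j <;> simp [← two_smul ℂ (1 : ComplexClifford n), smul_smul]
  have h11 : (!![0, 0; 0, 1] : Matrix (Fin 2) (Fin 2) (ComplexClifford n)) ∈ (ccHom n).range := by
    convert sub_mem (one_mem _) h00 using 1
    ext i j
    fin_cases i <;> fin_cases j <;> simp
  have hs : ∀ a : ComplexClifford n, !![a, 0; 0, a] ∈ (ccHom n).range := by
    intro a
    induction a using CliffordAlgebra.induction with
    | algebraMap r =>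
      convert (ccHom n).range.algebraMap_mem r using 1
      rw [Matrix.algebraMap_eq_diagonal]
      ext i j
      fin_cases i <;> fin_cases j <;> simp
    | ι v =>
      convert mul_mem (ccLin_mem n (Fin.cons 0 (Fin.cons 0 v))) hz using 1
      have h1 : (Fin.cons 0 (Fin.cons 0 v) : Fin (n+2) → ℂ) 1 = 0 := rfl
      simp [ccLin, h1]
    | mul a b ha hb =>
      convert mul_mem ha hb using 1
      simp
    | add a b ha hb =>
      convert add_mem ha hb using 1
      simp
  intro M
  change M ∈ (ccHom n).range
  convert add_mem (add_mem (mul_mem (hs (M 0 0)) h00) (mul_mem (mul_mem (hs (M 0 1)) h00) hx))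
    (add_mem (mul_mem (mul_mem (hs (M 1 0)) h11) hx) (mul_mem (hs (M 1 1)) h11)) using 1
  ext i j
  fin_cases i <;> fin_cases j <;> simp

/-- Paper's Theorem 3: `Cℂ(n+2) ≅ M₂(Cℂ(n))`. -/
theorem complexClifford_add_two_isomorphic_matrix (n : ℕ) :
    Nonempty
      (ComplexClifford (n + 2) ≃ₐ[ℂ]
        Matrix (Fin 2) (Fin 2) (ComplexClifford n)) := by
  obtain ⟨h1, h2⟩ := cc_finrank n
  obtain ⟨h3, h4⟩ := cc_finrank (n + 2)
  have hd : Module.finrank ℂ (ComplexClifford (n + 2)) =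
      Module.finrank ℂ (Matrix (Fin 2) (Fin 2) (ComplexClifford n)) := by
    rw [h4, Module.finrank_matrix, h2]
    simp
    ring
  have hs := ccHom_surj n
  have hi : Function.Injective (ccHom n) :=
    (LinearMap.injective_iff_surjective_of_finrank_eq_finrank
      (f := (ccHom n).toLinearMap) hd).2 hs
  exact ⟨AlgEquiv.ofBijective (ccHom n) ⟨hi, hs⟩⟩
end

section
/- For all natural numbers n and m, the complex Clifford algebra Cℂ(n+2m) is isomorphic as a ℂ-algebra to the matrix algebra Matrix (Fin (2^m)) (Fin (2^m)) (Cℂ(n)) of 2^m × 2^m matrices with entries in Cℂ(n). -/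
set_option linter.unusedSimpArgs false

open CliffordAlgebra Matrix

namespace CliffAux

noncomputable section

/-- Matrix-unit data gives an algebra hom. -/
def ofUnits {A B : Type*} [Ring A] [Ring B] [Algebra ℂ A] [Algebra ℂ B]
    (h : A →ₐ[ℂ] B) (E : Fin 2 → Fin 2 → B)
    (hc : ∀ a i j, E i j * h a = h a * E i j)
    (hE : ∀ i j k l, E i j * E k l = if j = k then E i l else 0)
    (h1 : E 0 0 + E 1 1 = 1) : Matrix (Fin 2) (Fin 2) A →ₐ[ℂ] B :=
  AlgHom.ofLinearMap
    { toFun := fun M => ∑ i, ∑ j, h (M i j) * E i j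
      map_add' := by
        intro M N
        simp [add_mul, Finset.sum_add_distrib]
      map_smul' := by
        intro c M
        simp [Finset.smul_sum] }
    (by simp [Fin.sum_univ_two, h1])
    (by
      intro M N
      have key : ∀ a b i j k l, h a * E i j * (h b * E k l)
          = h a * h b * (if j = k then E i l else 0) := by
        intro a b i j k l
        rw [← hE, mul_assoc, ← mul_assoc (E i j), hc]
        simp only [mul_assoc]
      simp [Fin.sum_univ_two, add_mul, mul_add, key, Matrix.mul_apply]
      abel)

variable {V : Type*} [AddCommGroup V] [Module ℂ V] (Q : QuadraticForm ℂ V)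

abbrev Q2 : QuadraticForm ℂ (V × (ℂ × ℂ)) := Q.prod (CliffordAlgebraQuaternion.Q 1 1)

theorem Q2_apply (v : V × (ℂ × ℂ)) :
    Q2 Q v = Q v.1 + (v.2.1 * v.2.1 + v.2.2 * v.2.2) := by
  simp [Q2]

def fwdLin : (V × (ℂ × ℂ)) →ₗ[ℂ] Matrix (Fin 2) (Fin 2) (CliffordAlgebra Q) where
  toFun v := !![ι Q v.1, algebraMap ℂ _ (v.2.1 - Complex.I * v.2.2);
    algebraMap ℂ _ (v.2.1 + Complex.I * v.2.2), - ι Q v.1]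
  map_add' v w := by
    ext i j
    fin_cases i <;> fin_cases j <;> simp [mul_add, add_comm, Algebra.algebraMap_eq_smul_one] <;>
      module
  map_smul' c v := by
    ext i j
    fin_cases i <;> fin_cases j <;>
      simp [Algebra.algebraMap_eq_smul_one] <;> module

def fwd : CliffordAlgebra (Q2 Q) →ₐ[ℂ] Matrix (Fin 2) (Fin 2) (CliffordAlgebra Q) :=
  lift (Q2 Q) ⟨fwdLin Q, by
    intro v
    have hI := Complex.I_mul_I
    rw [Q2_apply]
    ext i j
    fin_cases i <;> fin_cases j <;>
      simp only [fwdLin, LinearMap.coe_mk, AddHom.coe_mk, Matrix.mul_apply, Fin.sum_univ_two,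
        Matrix.algebraMap_matrix_apply] <;> simp [-map_add, -map_sub, -map_mul]
    · rw [← map_mul, ← map_add]; congr 1; linear_combination (-v.2.2*v.2.2) * hI
    · rw [Algebra.commutes]; simp
    · rw [Algebra.commutes]; simp
    · rw [← map_mul, ← map_add]; congr 1; linear_combination (-v.2.2*v.2.2) * hI⟩

theorem fwd_ι (v) : fwd Q (ι _ v) = fwdLin Q v := by simp [fwd]

def f : CliffordAlgebra (Q2 Q) := ι _ (0, (1, 0))
def g : CliffordAlgebra (Q2 Q) := ι _ (0, (0, 1))
def u : CliffordAlgebra (Q2 Q) := -Complex.I • (f Q * g Q)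

theorem ff : f Q * f Q = 1 := by simp [f, ι_sq_scalar, Q2_apply]
theorem gg : g Q * g Q = 1 := by simp [g, ι_sq_scalar, Q2_apply]
theorem gf : g Q * f Q = - (f Q * g Q) := by
  apply ι_mul_ι_comm_of_isOrtho
  simp [QuadraticMap.isOrtho_def]
theorem fx (x : V) : f Q * ι (Q2 Q) (x, 0) = - (ι (Q2 Q) (x, 0) * f Q) := by
  apply ι_mul_ι_comm_of_isOrtho
  simp [QuadraticMap.isOrtho_def, add_comm]
theorem gx (x : V) : g Q * ι (Q2 Q) (x, 0) = - (ι (Q2 Q) (x, 0) * g Q) := by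
  apply ι_mul_ι_comm_of_isOrtho
  simp [QuadraticMap.isOrtho_def, add_comm]
theorem fff (a) : f Q * (f Q * a) = a := by rw [← mul_assoc, ff, one_mul]
theorem ggg (a) : g Q * (g Q * a) = a := by rw [← mul_assoc, gg, one_mul]
theorem gfa (a) : g Q * (f Q * a) = -(f Q * (g Q * a)) := by
  rw [← mul_assoc, gf, neg_mul, mul_assoc]
theorem uu : u Q * u Q = 1 := by
  simp [u, mul_assoc, smul_smul, gfa, fff, gg, ff]
theorem uf : u Q * f Q = - (f Q * u Q) := by
  simp [u, mul_assoc, gf]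
theorem fu : f Q * u Q = -Complex.I • g Q := by
  simp [u, fff]
theorem ux (x : V) : u Q * ι (Q2 Q) (x, 0) = ι (Q2 Q) (x, 0) * u Q := by
  simp only [u, mul_assoc, smul_mul_assoc, mul_smul_comm, gx, mul_neg]
  rw [← mul_assoc, fx]
  simp [mul_assoc]

def base : CliffordAlgebra Q →ₐ[ℂ] CliffordAlgebra (Q2 Q) :=
  lift Q ⟨(LinearMap.mulRight ℂ (u Q)) ∘ₗ (ι (Q2 Q)) ∘ₗ (LinearMap.inl ℂ V (ℂ × ℂ)), by
    intro x
    simp only [LinearMap.comp_apply, LinearMap.mulRight_apply, LinearMap.inl_apply]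
    rw [mul_assoc, ← mul_assoc (u Q), ux, mul_assoc, uu, mul_one, ι_sq_scalar, Q2_apply]
    simp⟩

theorem base_ι (x) : base Q (ι _ x) = ι (Q2 Q) (x, 0) * u Q := by simp [base]

theorem comm_of (c : CliffordAlgebra (Q2 Q)) (h : ∀ x, c * base Q (ι _ x) = base Q (ι _ x) * c)
    (a) : c * base Q a = base Q a * c := by
  induction a using CliffordAlgebra.induction with
  | algebraMap r => simp [Algebra.commutes]
  | ι x => exact h x
  | mul a b ha hb => rw [map_mul, ← mul_assoc, ha, mul_assoc, hb, mul_assoc]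
  | add a b ha hb => rw [map_add, mul_add, add_mul, ha, hb]

theorem f_comm (a) : f Q * base Q a = base Q a * f Q := by
  apply comm_of
  intro x
  rw [base_ι, ← mul_assoc, fx, mul_assoc, uf]
  simp [mul_assoc]

theorem u_comm (a) : u Q * base Q a = base Q a * u Q := by
  apply comm_of
  intro x
  rw [base_ι, ← mul_assoc, ux]

def p : CliffordAlgebra (Q2 Q) := (2⁻¹ : ℂ) • (1 + u Q)
def q : CliffordAlgebra (Q2 Q) := (2⁻¹ : ℂ) • (1 - u Q)

theorem p_comm (a) : p Q * base Q a = base Q a * p Q := by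
  simp [p, add_mul, mul_add, u_comm]
theorem q_comm (a) : q Q * base Q a = base Q a * q Q := by
  simp [q, sub_mul, mul_sub, u_comm]
theorem pq_one : p Q + q Q = 1 := by
  rw [p, q, ← smul_add, add_add_sub_cancel, ← two_smul ℂ, smul_smul]; simp
theorem pp : p Q * p Q = p Q := by
  simp only [p, smul_mul_assoc, mul_smul_comm, add_mul, mul_add, uu, one_mul, mul_one]
  module
theorem qq : q Q * q Q = q Q := by
  simp only [q, smul_mul_assoc, mul_smul_comm, sub_mul, mul_sub, uu, one_mul, mul_one]
  module
theorem pq : p Q * q Q = 0 := by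
  simp only [p, q, smul_mul_assoc, mul_smul_comm, add_mul, mul_sub, uu, one_mul, mul_one]
  module
theorem qp : q Q * p Q = 0 := by
  simp only [p, q, smul_mul_assoc, mul_smul_comm, sub_mul, mul_add, uu, one_mul, mul_one]
  module
theorem pf : p Q * f Q = f Q * q Q := by
  simp only [p, q, smul_mul_assoc, mul_smul_comm, add_mul, mul_sub, uf, one_mul, mul_one]
  module
theorem qf : q Q * f Q = f Q * p Q := by
  simp only [p, q, smul_mul_assoc, mul_smul_comm, sub_mul, mul_add, uf, one_mul, mul_one]
  module

def E : Fin 2 → Fin 2 → CliffordAlgebra (Q2 Q) :=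
  ![![p Q, f Q * q Q], ![f Q * p Q, q Q]]

theorem E_mul (i j k l) : E Q i j * E Q k l = if j = k then E Q i l else 0 := by
  have pfa (a) : p Q * (f Q * a) = f Q * (q Q * a) := by rw [← mul_assoc, pf, mul_assoc]
  have qfa (a) : q Q * (f Q * a) = f Q * (p Q * a) := by rw [← mul_assoc, qf, mul_assoc]
  fin_cases i <;> fin_cases j <;> fin_cases k <;> fin_cases l <;>
    simp [E, mul_assoc, pfa, qfa, pp, qq, pq, qp, fff]

theorem E_comm (a) (i j) : E Q i j * base Q a = base Q a * E Q i j := by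
  have fb (b) : f Q * (base Q a * b) = base Q a * (f Q * b) := by
    rw [← mul_assoc, f_comm, mul_assoc]
  fin_cases i <;> fin_cases j <;> simp [E, mul_assoc, p_comm, q_comm, fb]

def bwd : Matrix (Fin 2) (Fin 2) (CliffordAlgebra Q) →ₐ[ℂ] CliffordAlgebra (Q2 Q) :=
  ofUnits (base Q) (E Q) (E_comm Q) (E_mul Q) (pq_one Q)

theorem bwd_apply (M) : bwd Q M = ∑ i, ∑ j, base Q (M i j) * E Q i j := rfl

theorem bwd_fwd : (bwd Q).comp (fwd Q) = AlgHom.id ℂ _ := by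
  apply CliffordAlgebra.hom_ext
  apply LinearMap.ext
  intro v
  obtain ⟨x, a, b⟩ := v
  have hv : ι (Q2 Q) (x, a, b) = ι (Q2 Q) (x, 0) + a • f Q + b • g Q := by
    rw [f, g, ← map_smul, ← map_smul, ← map_add, ← map_add]; simp
  have hI := Complex.I_mul_I
  change bwd Q (fwd Q (ι (Q2 Q) (x, a, b))) = ι (Q2 Q) (x, a, b)
  rw [fwd_ι, bwd_apply, hv]
  simp only [Fin.sum_univ_two]
  change base Q (ι Q x) * p Q + base Q (algebraMap ℂ _ (a - Complex.I * b)) * (f Q * q Q)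
    + (base Q (algebraMap ℂ _ (a + Complex.I * b)) * (f Q * p Q) + base Q (- ι Q x) * q Q) = _
  rw [map_neg, base_ι, AlgHom.commutes, AlgHom.commutes]
  simp only [
    Algebra.algebraMap_eq_smul_one, p, q, mul_smul_comm, smul_mul_assoc, mul_add, mul_sub, mul_one,
    one_mul, fu, neg_mul, mul_assoc, uu, smul_smul, smul_add, smul_sub]
  match_scalars
  all_goals ring_nf
  all_goals try simp

theorem fwd_f : fwd Q (f Q) = !![0, 1; 1, 0] := by simp [f, fwd_ι, fwdLin]
theorem fwd_g : fwd Q (g Q) = !![0, algebraMap ℂ _ (-Complex.I); algebraMap ℂ _ Complex.I, 0] := by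
  simp [g, fwd_ι, fwdLin]
theorem fwd_u : fwd Q (u Q) = !![1, 0; 0, -1] := by
  rw [u, map_smul, map_mul, fwd_f, fwd_g]
  ext i j
  fin_cases i <;> fin_cases j <;> simp [Algebra.algebraMap_eq_smul_one, smul_smul]
theorem fwd_p : fwd Q (p Q) = !![1, 0; 0, 0] := by
  rw [p, map_smul, map_add, fwd_u, map_one]
  ext i j
  fin_cases i <;> fin_cases j <;> simp
  module
theorem fwd_q : fwd Q (q Q) = !![0, 0; 0, 1] := by
  rw [q, map_smul, map_sub, fwd_u, map_one]
  ext i j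
  fin_cases i <;> fin_cases j <;> simp
  module

theorem fwd_base (a) : fwd Q (base Q a) = !![a, 0; 0, a] := by
  induction a using CliffordAlgebra.induction with
  | algebraMap r =>
    rw [AlgHom.commutes, AlgHom.commutes]
    ext i j
    fin_cases i <;> fin_cases j <;> simp [Matrix.algebraMap_matrix_apply]
  | ι x =>
    rw [base_ι, map_mul, fwd_u, fwd_ι]
    ext i j
    fin_cases i <;> fin_cases j <;> simp [fwdLin]
  | mul a b ha hb => rw [map_mul, map_mul, ha, hb]; simp
  | add a b ha hb => rw [map_add, map_add, ha, hb]; simp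

theorem fwd_bwd : (fwd Q).comp (bwd Q) = AlgHom.id ℂ _ := by
  apply AlgHom.ext
  intro M
  change fwd Q (bwd Q M) = M
  have h : bwd Q M = base Q (M 0 0) * p Q + base Q (M 0 1) * (f Q * q Q)
    + (base Q (M 1 0) * (f Q * p Q) + base Q (M 1 1) * q Q) := by
    rw [bwd_apply]; simp only [Fin.sum_univ_two]; rfl
  rw [h]
  simp only [map_add, map_mul]
  rw [fwd_base, fwd_base, fwd_base, fwd_base, fwd_p, fwd_q, fwd_f]
  ext i j
  fin_cases i <;> fin_cases j <;> simp

def step : CliffordAlgebra (Q2 Q) ≃ₐ[ℂ] Matrix (Fin 2) (Fin 2) (CliffordAlgebra Q) :=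
  AlgEquiv.ofAlgHom (fwd Q) (bwd Q) (fwd_bwd Q) (bwd_fwd Q)

def oneEquiv (A : Type*) [Ring A] [Algebra ℂ A] : A ≃ₐ[ℂ] Matrix (Fin 1) (Fin 1) A where
  toFun a := Matrix.of fun _ _ => a
  invFun M := M 0 0
  left_inv a := rfl
  right_inv M := by
    ext i j
    rw [Subsingleton.elim i 0, Subsingleton.elim j 0]; rfl
  map_mul' a b := by
    ext i j
    simp [Matrix.mul_apply]
  map_add' a b := rfl
  commutes' r := by
    ext i j
    simp [Matrix.algebraMap_matrix_apply, Subsingleton.elim i j]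

abbrev S (n : ℕ) := QuadraticMap.weightedSumSquares ℂ (fun _ : Fin n => (1 : ℂ))

def isom (n : ℕ) : (S (n + 2)).IsometryEquiv (Q2 (S n)) where
  toFun v := (fun i => v i.castSucc.castSucc, v (Fin.last n).castSucc, v (Fin.last (n+1)))
  invFun w := Fin.snoc (α := fun _ => ℂ) (Fin.snoc (α := fun _ => ℂ) w.1 w.2.1) w.2.2
  map_add' v w := rfl
  map_smul' c v := rfl
  left_inv v := by
    funext i
    refine Fin.lastCases ?_ (fun i => ?_) i
    · simp
    · refine Fin.lastCases ?_ (fun i => ?_) i <;> simp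
  right_inv w := by simp
  map_app' v := by
    rw [Q2_apply]
    simp [S, QuadraticMap.weightedSumSquares_apply, Fin.sum_univ_castSucc, add_assoc]

end

end CliffAux

/-- `Cℂ(n+2m) ≅ M_{2^m}(Cℂ(n))`. -/
theorem complexClifford_add_two_mul_isomorphic_matrix (n m : ℕ) :
    Nonempty
      (ComplexClifford (n + 2 * m) ≃ₐ[ℂ]
        Matrix (Fin (2 ^ m)) (Fin (2 ^ m)) (ComplexClifford n)) := by
  induction m with
  | zero =>
    exact ⟨CliffAux.oneEquiv (ComplexClifford n)⟩
  | succ m ih =>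
    obtain ⟨e⟩ := ih
    have e1 : ComplexClifford (n + 2 * (m + 1)) ≃ₐ[ℂ]
        Matrix (Fin 2) (Fin 2) (ComplexClifford (n + 2 * m)) :=
      (CliffordAlgebra.equivOfIsometry (CliffAux.isom (n + 2 * m))).trans (CliffAux.step _)
    exact ⟨((e1.trans e.mapMatrix).trans (Matrix.compAlgEquiv _ _ _ _)).trans
      (Matrix.reindexAlgEquiv ℂ _ (finProdFinEquiv.trans (finCongr (by rw [pow_succ, mul_comm]))))⟩
end

section
/- For every natural number ν, the complex Clifford algebra Cℂ(2ν) of even dimensionality is isomorphic as a ℂ-algebra to the full matrix algebra Matrix (Fin (2^ν)) (Fin (2^ν)) ℂ of 2^ν × 2^ν complex matrices. -/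
/-- Algebra hom out of a 2x2 matrix algebra from matrix units. -/
noncomputable def cliffMatLift {A B : Type*} [Ring A] [Ring B] [Algebra ℂ A] [Algebra ℂ B]
    (j : A →ₐ[ℂ] B) (E : Fin 2 → Fin 2 → B)
    (hE : ∀ a b c d, E a b * E c d = if b = c then E a d else 0)
    (h1 : E 0 0 + E 1 1 = 1) (hc : ∀ x a b, E a b * j x = j x * E a b) :
    Matrix (Fin 2) (Fin 2) A →ₐ[ℂ] B :=
  AlgHom.ofLinearMap
    { toFun := fun M => ∑ a, ∑ b, j (M a b) * E a b
      map_add' := by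
        intro M N
        simp [add_mul, Finset.sum_add_distrib]
      map_smul' := by
        intro r M
        simp [Finset.smul_sum] }
    (by simp [h1])
    (by
      intro M N
      have key : ∀ x y a b c d, (j x * E a b) * (j y * E c d)
          = if b = c then j (x * y) * E a d else 0 := by
        intro x y a b c d
        calc (j x * E a b) * (j y * E c d) = j x * (E a b * j y) * E c d := by
              simp only [mul_assoc]
          _ = j (x * y) * (E a b * E c d) := by rw [hc, map_mul]; simp only [mul_assoc]
          _ = _ := by rw [hE]; split_ifs <;> simp
      simp only [LinearMap.coe_mk, AddHom.coe_mk, Fin.sum_univ_two, mul_add, add_mul, key,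
        Matrix.mul_apply, map_add]
      simp
      abel)

section
variable {M : Type*} [AddCommGroup M] [Module ℂ M] (Q : QuadraticForm ℂ M)

/-- `Q` plus two squares. -/
noncomputable abbrev cliffQ2 : QuadraticForm ℂ (M × ℂ × ℂ) :=
  Q.prod ((QuadraticMap.sq (R := ℂ)).prod (QuadraticMap.sq (R := ℂ)))

/-- The map to matrices. -/
noncomputable def cliffPhi :
    CliffordAlgebra (cliffQ2 Q) →ₐ[ℂ] Matrix (Fin 2) (Fin 2) (CliffordAlgebra Q) :=
  CliffordAlgebra.lift (cliffQ2 Q)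
    ⟨{ toFun := fun v =>
        !![CliffordAlgebra.ι Q v.1, algebraMap ℂ _ (v.2.1 - Complex.I * v.2.2);
           algebraMap ℂ _ (v.2.1 + Complex.I * v.2.2), - CliffordAlgebra.ι Q v.1]
       map_add' := by
        intro v w
        ext a b
        fin_cases a <;> fin_cases b <;> simp <;> abel_nf <;> simp [mul_add] <;> abel
       map_smul' := by
        intro r v
        have h : ∀ z : ℂ, r • algebraMap ℂ (CliffordAlgebra Q) z = algebraMap ℂ _ (r * z) := by
          intro z
          rw [Algebra.smul_def, map_mul]
        ext a b
        fin_cases a <;> fin_cases b <;>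
          simp [h, -map_add, -map_sub, -map_mul, mul_sub, mul_add, mul_left_comm] }, by
      rintro ⟨x, a, b⟩
      have hc := Algebra.commutes (A := CliffordAlgebra Q) (a - Complex.I * b) (CliffordAlgebra.ι Q x)
      have hd := Algebra.commutes (A := CliffordAlgebra Q) (a + Complex.I * b) (CliffordAlgebra.ι Q x)
      have h1 : (a - Complex.I * b) * (a + Complex.I * b) = a * a + b * b := by
        linear_combination (- b * b) * Complex.I_mul_I
      have h2 : (a + Complex.I * b) * (a - Complex.I * b) = a * a + b * b := by
        rw [mul_comm, h1]
      simp only [LinearMap.coe_mk, AddHom.coe_mk, Matrix.mul_fin_two, hc, hd, ← map_mul, h1, h2,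
        neg_mul, mul_neg, neg_neg, CliffordAlgebra.ι_sq_scalar, ← map_add]
      ext p q
      fin_cases p <;> fin_cases q <;>
        simp [Matrix.algebraMap_matrix_apply, hc, hd] <;> abel⟩

theorem cliffPhi_ι (v : M × ℂ × ℂ) : cliffPhi Q (CliffordAlgebra.ι _ v) =
    !![CliffordAlgebra.ι Q v.1, algebraMap ℂ _ (v.2.1 - Complex.I * v.2.2);
           algebraMap ℂ _ (v.2.1 + Complex.I * v.2.2), - CliffordAlgebra.ι Q v.1] := by
  unfold cliffPhi
  rw [CliffordAlgebra.lift_ι_apply]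
  rfl

/-- first new generator -/
noncomputable def cliffF : CliffordAlgebra (cliffQ2 Q) := CliffordAlgebra.ι _ (0, 1, 0)
/-- second new generator -/
noncomputable def cliffG : CliffordAlgebra (cliffQ2 Q) := CliffordAlgebra.ι _ (0, 0, 1)
/-- chirality -/
noncomputable def cliffS : CliffordAlgebra (cliffQ2 Q) := (-Complex.I) • (cliffF Q * cliffG Q)

theorem cliffF_sq : cliffF Q * cliffF Q = 1 := by simp [cliffF]
theorem cliffG_sq : cliffG Q * cliffG Q = 1 := by simp [cliffG]

theorem cliffGF : cliffG Q * cliffF Q = - (cliffF Q * cliffG Q) := by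
  unfold cliffF cliffG
  apply CliffordAlgebra.ι_mul_ι_comm_of_isOrtho
  simp [QuadraticMap.isOrtho_def]

theorem cliffxF (x : M) : CliffordAlgebra.ι (cliffQ2 Q) (x, 0, 0) * cliffF Q =
    - (cliffF Q * CliffordAlgebra.ι (cliffQ2 Q) (x, 0, 0)) := by
  unfold cliffF
  apply CliffordAlgebra.ι_mul_ι_comm_of_isOrtho
  simp [QuadraticMap.isOrtho_def]

theorem cliffxG (x : M) : CliffordAlgebra.ι (cliffQ2 Q) (x, 0, 0) * cliffG Q =
    - (cliffG Q * CliffordAlgebra.ι (cliffQ2 Q) (x, 0, 0)) := by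
  unfold cliffG
  apply CliffordAlgebra.ι_mul_ι_comm_of_isOrtho
  simp [QuadraticMap.isOrtho_def]

theorem cliffFS : cliffF Q * cliffS Q = (-Complex.I) • cliffG Q := by
  rw [cliffS, mul_smul_comm, ← mul_assoc, cliffF_sq, one_mul]

theorem cliffSF : cliffS Q * cliffF Q = - (cliffF Q * cliffS Q) := by
  rw [cliffFS, cliffS, smul_mul_assoc, mul_assoc, cliffGF, mul_neg, ← mul_assoc, cliffF_sq,
    one_mul, smul_neg]

theorem cliffS_sq : cliffS Q * cliffS Q = 1 := by
  nth_rw 1 [cliffS]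
  rw [smul_mul_assoc, mul_assoc, show cliffG Q * cliffS Q = (Complex.I) • cliffF Q from ?_]
  · rw [mul_smul_comm, cliffF_sq, smul_smul]; simp
  · rw [cliffS, mul_smul_comm, ← mul_assoc, cliffGF, neg_mul, mul_assoc, cliffG_sq]; simp

theorem cliffxS (x : M) : CliffordAlgebra.ι (cliffQ2 Q) (x, 0, 0) * cliffS Q =
    cliffS Q * CliffordAlgebra.ι (cliffQ2 Q) (x, 0, 0) := by
  rw [cliffS, mul_smul_comm, ← mul_assoc, cliffxF, neg_mul, mul_assoc, cliffxG, smul_mul_assoc,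
    mul_neg, neg_neg, mul_assoc]

/-- inclusion of the smaller Clifford algebra -/
noncomputable def cliffJ : CliffordAlgebra Q →ₐ[ℂ] CliffordAlgebra (cliffQ2 Q) :=
  CliffordAlgebra.lift Q
    ⟨(LinearMap.mulRight ℂ (cliffS Q)) ∘ₗ (CliffordAlgebra.ι (cliffQ2 Q)) ∘ₗ
      (LinearMap.inl ℂ M (ℂ × ℂ)), by
      intro x
      have : CliffordAlgebra.ι (cliffQ2 Q) (x, 0) = CliffordAlgebra.ι (cliffQ2 Q) (x, 0, 0) := rfl
      simp only [LinearMap.comp_apply, LinearMap.mulRight_apply, LinearMap.inl_apply, this]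
      rw [mul_assoc, ← mul_assoc (cliffS Q), ← cliffxS, mul_assoc, cliffS_sq, mul_one,
        CliffordAlgebra.ι_sq_scalar]
      simp⟩

theorem cliffJ_ι (x : M) : cliffJ Q (CliffordAlgebra.ι Q x) =
    CliffordAlgebra.ι (cliffQ2 Q) (x, 0, 0) * cliffS Q := by
  unfold cliffJ
  rw [CliffordAlgebra.lift_ι_apply]
  rfl

theorem cliffJ_comm (z : CliffordAlgebra (cliffQ2 Q))
    (h : ∀ x, z * cliffJ Q (CliffordAlgebra.ι Q x) = cliffJ Q (CliffordAlgebra.ι Q x) * z)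
    (y : CliffordAlgebra Q) : z * cliffJ Q y = cliffJ Q y * z := by
  induction y using CliffordAlgebra.induction with
  | algebraMap r => rw [AlgHom.commutes, Algebra.commutes]
  | ι x => exact h x
  | mul a b ha hb => rw [map_mul, ← mul_assoc, ha, mul_assoc, hb, mul_assoc]
  | add a b ha hb => rw [map_add, mul_add, add_mul, ha, hb]

theorem cliffJ_F (y : CliffordAlgebra Q) : cliffF Q * cliffJ Q y = cliffJ Q y * cliffF Q := by
  apply cliffJ_comm
  intro x
  rw [cliffJ_ι, mul_assoc, cliffSF, mul_neg, ← mul_assoc, ← mul_assoc, cliffxF, neg_mul, neg_neg]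

theorem cliffJ_S (y : CliffordAlgebra Q) : cliffS Q * cliffJ Q y = cliffJ Q y * cliffS Q := by
  apply cliffJ_comm
  intro x
  rw [cliffJ_ι, ← mul_assoc, cliffxS]

/-- matrix units -/
noncomputable def cliffE : Fin 2 → Fin 2 → CliffordAlgebra (cliffQ2 Q) :=
  !![(1/2 : ℂ) • (1 + cliffS Q), (1/2 : ℂ) • ((1 + cliffS Q) * cliffF Q);
     (1/2 : ℂ) • ((1 - cliffS Q) * cliffF Q), (1/2 : ℂ) • (1 - cliffS Q)]

theorem cliffE_mul (a b c d : Fin 2) :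
    cliffE Q a b * cliffE Q c d = if b = c then cliffE Q a d else 0 := by
  have hs := cliffS_sq Q
  have hf := cliffF_sq Q
  have h1 : (1 + cliffS Q) * (1 + cliffS Q) = (2 : ℂ) • (1 + cliffS Q) := by
    rw [two_smul]; simp only [mul_add, add_mul, hs, one_mul, mul_one]; abel
  have h2 : (1 - cliffS Q) * (1 - cliffS Q) = (2 : ℂ) • (1 - cliffS Q) := by
    rw [two_smul]; simp only [mul_sub, sub_mul, hs, one_mul, mul_one]; abel
  have h3 : (1 + cliffS Q) * (1 - cliffS Q) = 0 := by
    simp only [mul_sub, add_mul, hs, one_mul, mul_one]; abel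
  have h4 : (1 - cliffS Q) * (1 + cliffS Q) = 0 := by
    simp only [mul_add, sub_mul, hs, one_mul, mul_one]; abel
  have h5 : cliffF Q * (1 + cliffS Q) = (1 - cliffS Q) * cliffF Q := by
    rw [mul_add, sub_mul, cliffSF]; simp
  have h6 : cliffF Q * (1 - cliffS Q) = (1 + cliffS Q) * cliffF Q := by
    rw [mul_sub, add_mul, cliffSF]; simp [sub_eq_add_neg]
  have g (x y : CliffordAlgebra (cliffQ2 Q)) (h : cliffF Q * x = y * cliffF Q) (z) :
    cliffF Q * (x * z) = y * (cliffF Q * z) := by rw [← mul_assoc, h, mul_assoc]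
  have k (x y w : CliffordAlgebra (cliffQ2 Q)) (h : x * y = w) (z) :
    x * (y * z) = w * z := by rw [← mul_assoc, h]
  unfold cliffE
  generalize 1 + cliffS Q = p at *
  generalize 1 - cliffS Q = q at *
  fin_cases a <;> fin_cases b <;> fin_cases c <;> fin_cases d <;>
    simp [mul_assoc, h1, h2, h3, h4, h5, h6, hf, g _ _ h5, g _ _ h6, k _ _ _ h1,
      k _ _ _ h2, k _ _ _ h3, k _ _ _ h4, smul_smul]

/-- inverse map -/
noncomputable def cliffPsi :
    Matrix (Fin 2) (Fin 2) (CliffordAlgebra Q) →ₐ[ℂ] CliffordAlgebra (cliffQ2 Q) :=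
  cliffMatLift (cliffJ Q) (cliffE Q) (cliffE_mul Q)
    (by
      simp only [cliffE, Matrix.of_apply, Matrix.cons_val', Matrix.cons_val_zero,
        Matrix.cons_val_one, Matrix.cons_val_fin_one]
      rw [← smul_add, add_add_sub_cancel, ← two_smul ℂ, smul_smul]
      norm_num)
    (by
      intro y a b
      have h1 := cliffJ_F Q y
      have h2 := cliffJ_S Q y
      have h3 : (cliffS Q * cliffF Q) * cliffJ Q y = cliffJ Q y * (cliffS Q * cliffF Q) := by
        rw [mul_assoc, h1, ← mul_assoc, h2, mul_assoc]
      fin_cases a <;> fin_cases b <;>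
        simp [cliffE, add_mul, mul_add, sub_mul, mul_sub, h1, h2, h3])

theorem cliffPsi_apply (N : Matrix (Fin 2) (Fin 2) (CliffordAlgebra Q)) :
    cliffPsi Q N = ∑ a, ∑ b, cliffJ Q (N a b) * cliffE Q a b := rfl

theorem cliffPsi_Phi : (cliffPsi Q).comp (cliffPhi Q) = AlgHom.id ℂ _ := by
  apply CliffordAlgebra.hom_ext
  apply LinearMap.ext
  rintro ⟨x, a, b⟩
  have hS : cliffS Q * cliffF Q = Complex.I • cliffG Q := by
    rw [cliffSF, cliffFS, neg_smul, neg_neg]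
  have hv : CliffordAlgebra.ι (cliffQ2 Q) (x, a, b) =
      CliffordAlgebra.ι (cliffQ2 Q) (x, 0, 0) + a • cliffF Q + b • cliffG Q := by
    unfold cliffF cliffG
    rw [← map_smul, ← map_smul, ← map_add, ← map_add]
    simp
  have hx : cliffJ Q (CliffordAlgebra.ι Q x) * cliffS Q
      = CliffordAlgebra.ι (cliffQ2 Q) (x, 0, 0) := by
    rw [cliffJ_ι, mul_assoc, cliffS_sq, mul_one]
  have hI := Complex.I_mul_I
  change cliffPsi Q (cliffPhi Q (CliffordAlgebra.ι _ (x, a, b))) = CliffordAlgebra.ι _ (x, a, b)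
  rw [cliffPhi_ι, cliffPsi_apply, hv, ← hx]
  simp only [cliffE, Fin.sum_univ_two, Matrix.of_apply, Matrix.cons_val', Matrix.cons_val_zero,
    Matrix.cons_val_one, Matrix.cons_val_fin_one, AlgHom.commutes, ← Algebra.smul_def, map_neg,
    add_mul, sub_mul, mul_add, mul_sub, hS, one_mul, mul_one, mul_smul_comm, neg_mul]
  match_scalars <;> first | ring1 | linear_combination (-b) * hI

theorem cliffPhi_F : cliffPhi Q (cliffF Q) = !![0, 1; 1, 0] := by
  simp [cliffF, cliffPhi_ι]

theorem cliffPhi_S : cliffPhi Q (cliffS Q) = !![1, 0; 0, -1] := by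
  rw [cliffS, map_smul, map_mul, cliffPhi_F, cliffG, cliffPhi_ι]
  ext a b
  fin_cases a <;> fin_cases b <;> simp [Algebra.smul_def, ← map_mul]

theorem cliffPhi_J (y : CliffordAlgebra Q) : cliffPhi Q (cliffJ Q y) = !![y, 0; 0, y] := by
  induction y using CliffordAlgebra.induction with
  | algebraMap r =>
    rw [AlgHom.commutes, AlgHom.commutes]
    ext a b
    fin_cases a <;> fin_cases b <;> simp [Matrix.algebraMap_matrix_apply]
  | ι x => rw [cliffJ_ι, map_mul, cliffPhi_ι, cliffPhi_S]; simp
  | mul a b ha hb => rw [map_mul, map_mul, ha, hb]; simp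
  | add a b ha hb => rw [map_add, map_add, ha, hb]; simp

theorem cliffPhi_E (a b : Fin 2) : cliffPhi Q (cliffE Q a b) = Matrix.single a b 1 := by
  have half : ((2 : ℂ)⁻¹) • (1 : CliffordAlgebra Q) + ((2 : ℂ)⁻¹) • (1 : CliffordAlgebra Q)
      = 1 := by
    rw [← two_smul ℂ, smul_smul]; simp
  fin_cases a <;> fin_cases b <;> ext c d <;> fin_cases c <;> fin_cases d <;>
    simp [cliffE, cliffPhi_F, cliffPhi_S, Matrix.one_fin_two, half, Matrix.single_apply]

theorem cliffPhi_Psi : (cliffPhi Q).comp (cliffPsi Q) = AlgHom.id ℂ _ := by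
  apply AlgHom.ext
  intro N
  simp only [AlgHom.comp_apply, cliffPsi_apply, map_add, map_mul, cliffPhi_J, Fin.sum_univ_two,
    cliffPhi_E]
  ext a b
  fin_cases a <;> fin_cases b <;>
    simp [Matrix.vecMul, dotProduct, Fin.sum_univ_two]

/-- The periodicity isomorphism. -/
noncomputable def cliffEquiv :
    CliffordAlgebra (cliffQ2 Q) ≃ₐ[ℂ] Matrix (Fin 2) (Fin 2) (CliffordAlgebra Q) :=
  AlgEquiv.ofAlgHom (cliffPhi Q) (cliffPsi Q) (cliffPhi_Psi Q) (cliffPsi_Phi Q)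

end

/-- splitting off two coordinates -/
noncomputable def cliffIso (n : ℕ) :
    (QuadraticMap.weightedSumSquares ℂ (fun _ : Fin (n + 2) => (1 : ℂ))).IsometryEquiv
      (cliffQ2 (QuadraticMap.weightedSumSquares ℂ (fun _ : Fin n => (1 : ℂ)))) where
  toFun f := (fun i => f i.succ.succ, f 0, f 1)
  invFun p := Fin.cons p.2.1 (Fin.cons p.2.2 p.1)
  map_add' f g := rfl
  map_smul' r f := rfl
  left_inv f := by
    ext i
    refine Fin.cases ?_ (fun i => ?_) i
    · rfl
    · refine Fin.cases ?_ (fun i => ?_) i <;> rfl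
  right_inv p := rfl
  map_app' f := by
    simp [QuadraticMap.weightedSumSquares_apply, Fin.sum_univ_succ]
    ring

/-- base case -/
noncomputable def cliffIso0 :
    (QuadraticMap.weightedSumSquares ℂ (fun _ : Fin 0 => (1 : ℂ))).IsometryEquiv
      (0 : QuadraticForm ℂ Unit) where
  toFun _ := ()
  invFun _ := 0
  map_add' f g := rfl
  map_smul' r f := rfl
  left_inv f := by
    ext i
    exact i.elim0
  right_inv p := rfl
  map_app' f := by
    simp [QuadraticMap.weightedSumSquares_apply]

/-- one by one matrices -/
noncomputable def cliffM1 : ℂ ≃ₐ[ℂ] Matrix (Fin 1) (Fin 1) ℂ :=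
  AlgEquiv.ofBijective (Algebra.ofId ℂ (Matrix (Fin 1) (Fin 1) ℂ)) (by
    constructor
    · exact (Algebra.ofId ℂ (Matrix (Fin 1) (Fin 1) ℂ)).toRingHom.injective
    · intro N
      refine ⟨N 0 0, ?_⟩
      ext a b
      fin_cases a
      fin_cases b
      simp [Algebra.ofId_apply, Matrix.algebraMap_matrix_apply])

/-- `Cℂ(2ν) ≅ M_{2^ν}(ℂ)`. -/
theorem complexClifford_even_isomorphic_matrix (ν : ℕ) :
    Nonempty (ComplexClifford (2 * ν) ≃ₐ[ℂ] Matrix (Fin (2 ^ ν)) (Fin (2 ^ ν)) ℂ) := by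
  induction ν with
  | zero =>
    exact ⟨(CliffordAlgebra.equivOfIsometry cliffIso0).trans
      (CliffordAlgebraRing.equiv.trans cliffM1)⟩
  | succ k ih =>
    obtain ⟨e⟩ := ih
    exact ⟨(CliffordAlgebra.equivOfIsometry (cliffIso (2 * k))).trans <|
      (cliffEquiv _).trans <| e.mapMatrix.trans <|
      (Matrix.compAlgEquiv (Fin 2) (Fin (2 ^ k)) ℂ ℂ).trans <|
      Matrix.reindexAlgEquiv ℂ ℂ (finProdFinEquiv.trans (finCongr (by ring)))⟩
end

section
/- For every natural number ν, the complex Clifford algebra Cℂ(2ν+1) of odd dimensionality is isomorphic as a ℂ-algebra to the direct sum (product algebra) Cℂ(2ν) × Cℂ(2ν) of two copies of Cℂ(2ν). (Equation (16) of the paper; the decomposition is realized by the mutually orthogonal central idempotents ε = (1 ± ω)/2 built from the volume element.) -/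
section CliffHelpers

/-- The (normalized) volume element. -/
noncomputable def cliffVol {B : Type} [Ring B] [Algebra ℂ B] (f : ℕ → B) : ℕ → B
  | 0 => 1
  | n + 1 => cliffVol f n * (Complex.I • (f (2 * n) * f (2 * n + 1)))

theorem cliffVol_map {B C : Type} [Ring B] [Algebra ℂ B] [Ring C] [Algebra ℂ C]
    (φ : B →ₐ[ℂ] C) (f : ℕ → B) (n : ℕ) :
    φ (cliffVol f n) = cliffVol (fun i => φ (f i)) n := by
  induction n with
  | zero => simp [cliffVol]
  | succ n ih => simp [cliffVol, ih]

theorem cliffVol_comm {B : Type} [Ring B] [Algebra ℂ B] (f : ℕ → B) (x : B) (n : ℕ)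
    (h : ∀ i < 2 * n, x * f i = -(f i * x)) : x * cliffVol f n = cliffVol f n * x := by
  induction n with
  | zero => simp [cliffVol]
  | succ n ih =>
    have h1 := ih (fun i hi => h i (by omega))
    have h2 := h (2 * n) (by omega)
    have h3 := h (2 * n + 1) (by omega)
    have h4 : x * (f (2 * n) * f (2 * n + 1)) = (f (2 * n) * f (2 * n + 1)) * x := by
      rw [← mul_assoc, h2, neg_mul, mul_assoc, h3, mul_neg, neg_neg, mul_assoc]
    rw [cliffVol, ← mul_assoc, h1, mul_assoc, mul_assoc, mul_smul_comm, h4, smul_mul_assoc]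

theorem cliffVol_anti {B : Type} [Ring B] [Algebra ℂ B] (f : ℕ → B) (n : ℕ)
    (h : ∀ i < 2 * n, ∀ j < 2 * n, i ≠ j → f i * f j = -(f j * f i)) :
    ∀ i < 2 * n, f i * cliffVol f n = -(cliffVol f n * f i) := by
  induction n with
  | zero => intro i hi; omega
  | succ n ih =>
    intro i hi
    have ih' := ih (fun i hi j hj => h i (by omega) j (by omega))
    rw [cliffVol, ← mul_assoc, mul_assoc (cliffVol f n), mul_smul_comm, smul_mul_assoc,
      mul_smul_comm, ← smul_neg]
    congr 1
    have hab := h (2 * n) (by omega) (2 * n + 1) (by omega) (by omega)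
    have hc : ∀ i, 2 * n ≤ i → i < 2 * (n + 1) → f i * cliffVol f n = cliffVol f n * f i :=
      fun i h1 h2 => cliffVol_comm f _ n (fun j hj => h i h2 j (by omega) (by omega))
    by_cases h1 : i < 2 * n
    · have ha := h i hi (2 * n) (by omega) (by omega)
      have hb := h i hi (2 * n + 1) (by omega) (by omega)
      have h4 : f i * (f (2 * n) * f (2 * n + 1)) = (f (2 * n) * f (2 * n + 1)) * f i := by
        rw [← mul_assoc, ha, neg_mul, mul_assoc, hb, mul_neg, neg_neg, mul_assoc]
      rw [ih' i h1, neg_mul, mul_assoc, h4]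
    · rw [hc i (by omega) hi, mul_assoc, ← mul_neg]
      congr 1
      obtain rfl | rfl : i = 2 * n ∨ i = 2 * n + 1 := by omega
      · rw [mul_assoc, ← mul_neg, ← hab]
      · rw [← mul_assoc, hab, neg_mul, neg_neg]

theorem cliffVol_sq {B : Type} [Ring B] [Algebra ℂ B] (f : ℕ → B) (n : ℕ)
    (h1 : ∀ i < 2 * n, f i * f i = 1)
    (h : ∀ i < 2 * n, ∀ j < 2 * n, i ≠ j → f i * f j = -(f j * f i)) :
    cliffVol f n * cliffVol f n = 1 := by
  induction n with
  | zero => simp [cliffVol]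
  | succ n ih =>
    have ih' := ih (fun i hi => h1 i (by omega)) (fun i hi j hj => h i (by omega) j (by omega))
    have hab := h (2 * n) (by omega) (2 * n + 1) (by omega) (by omega)
    have hc : ∀ i, 2 * n ≤ i → i < 2 * (n + 1) → f i * cliffVol f n = cliffVol f n * f i :=
      fun i h1 h2 => cliffVol_comm f _ n (fun j hj => h i h2 j (by omega) (by omega))
    have ha := hc (2 * n) (by omega) (by omega)
    have hb := hc (2 * n + 1) (by omega) (by omega)
    have haa := h1 (2 * n) (by omega)
    have hbb := h1 (2 * n + 1) (by omega)
    rw [cliffVol]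
    generalize cliffVol f n = w at *
    generalize f (2 * n) = a at *
    generalize f (2 * n + 1) = b at *
    have e1 : (a * b) * w = w * (a * b) := by
      rw [mul_assoc, hb, ← mul_assoc, ha, mul_assoc]
    have e2 : (a * b) * (a * b) = -1 := by
      calc (a * b) * (a * b) = (a * b) * (-(b * a)) := by rw [← hab]
        _ = -(a * (b * b) * a) := by simp only [mul_neg, mul_assoc]
        _ = -1 := by rw [hbb, mul_one, haa]
    calc w * (Complex.I • (a * b)) * (w * (Complex.I • (a * b)))
        = (Complex.I * Complex.I) • (w * ((a * b) * w) * (a * b)) := by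
          simp only [mul_smul_comm, smul_mul_assoc, smul_smul, mul_assoc]
      _ = (Complex.I * Complex.I) • ((w * w) * ((a * b) * (a * b))) := by
          rw [e1]; simp only [mul_assoc]
      _ = 1 := by rw [ih', e2]; simp

/-- the form -/
noncomputable abbrev cQ (n : ℕ) : QuadraticForm ℂ (Fin n → ℂ) :=
  QuadraticMap.weightedSumSquares ℂ (fun _ : Fin n => (1 : ℂ))

theorem cQ_apply (n : ℕ) (v : Fin n → ℂ) : cQ n v = ∑ i, v i * v i := by
  simp [cQ, QuadraticMap.weightedSumSquares_apply]

theorem cQ_anti (n : ℕ) (v w : Fin n → ℂ) (h : ∑ i, v i * w i = 0) :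
    CliffordAlgebra.ι (cQ n) v * CliffordAlgebra.ι (cQ n) w
      = -(CliffordAlgebra.ι (cQ n) w * CliffordAlgebra.ι (cQ n) v) := by
  rw [eq_neg_iff_add_eq_zero, CliffordAlgebra.ι_mul_ι_add_swap]
  have : QuadraticMap.polar (cQ n) v w = 0 := by
    rw [QuadraticMap.polar, cQ_apply, cQ_apply, cQ_apply, ← Finset.sum_sub_distrib,
      ← Finset.sum_sub_distrib]
    calc _ = ∑ i, 2 * (v i * w i) := Finset.sum_congr rfl (fun i _ => by
            simp only [Pi.add_apply]; ring)
      _ = 0 := by rw [← Finset.mul_sum, h, mul_zero]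
  rw [this, map_zero]

theorem exists_omega (ν : ℕ) : ∃ ω : ComplexClifford (2 * ν), ω * ω = 1 ∧
    (∀ w, CliffordAlgebra.ι (cQ (2 * ν)) w * ω = -(ω * CliffordAlgebra.ι (cQ (2 * ν)) w)) ∧
    ∀ (C : Type) [Ring C] [Algebra ℂ C] (φ : ComplexClifford (2 * ν) →ₐ[ℂ] C) (x : C),
      (∀ w, x * φ (CliffordAlgebra.ι (cQ (2 * ν)) w)
        = -(φ (CliffordAlgebra.ι (cQ (2 * ν)) w) * x)) → x * φ ω = φ ω * x := by
  let f : ℕ → ComplexClifford (2 * ν) := fun i =>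
    if h : i < 2 * ν then CliffordAlgebra.ι (cQ (2 * ν)) (Pi.single ⟨i, h⟩ 1) else 0
  have hf : ∀ i (h : i < 2 * ν),
      f i = CliffordAlgebra.ι (cQ (2 * ν)) (Pi.single ⟨i, h⟩ 1) := fun i h => dif_pos h
  have h1 : ∀ i < 2 * ν, f i * f i = 1 := by
    intro i hi
    rw [hf i hi, CliffordAlgebra.ι_sq_scalar, cQ_apply]
    simp [Pi.single_apply]
  have h2 : ∀ i < 2 * ν, ∀ j < 2 * ν, i ≠ j → f i * f j = -(f j * f i) := by
    intro i hi j hj hij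
    rw [hf i hi, hf j hj]
    apply cQ_anti
    simp [Pi.single_apply, hij.symm]
  refine ⟨cliffVol f ν, cliffVol_sq f ν h1 h2, ?_, ?_⟩
  · intro w
    have hw : CliffordAlgebra.ι (cQ (2 * ν)) w = ∑ i : Fin (2 * ν), w i • f i := by
      conv_lhs => rw [pi_eq_sum_univ' w]
      rw [map_sum]
      refine Finset.sum_congr rfl (fun i _ => ?_)
      rw [map_smul, hf i i.2]
    rw [hw, Finset.sum_mul, Finset.mul_sum, ← Finset.sum_neg_distrib]
    refine Finset.sum_congr rfl (fun i _ => ?_)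
    rw [smul_mul_assoc, cliffVol_anti f ν h2 i i.2, mul_smul_comm, smul_neg]
  · intro C _ _ φ x hx
    rw [cliffVol_map]
    apply cliffVol_comm
    intro i hi
    rw [hf i hi]
    exact hx _

/-- inclusion -/
noncomputable def cInc (n : ℕ) : (Fin n → ℂ) →ₗ[ℂ] (Fin (n + 1) → ℂ) where
  toFun w := Fin.snoc (α := fun _ => ℂ) w 0
  map_add' v w := by
    ext i; refine Fin.lastCases ?_ (fun i => ?_) i <;> simp
  map_smul' c w := by
    ext i; refine Fin.lastCases ?_ (fun i => ?_) i <;> simp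

theorem cInc_castSucc (n : ℕ) (w : Fin n → ℂ) (i : Fin n) : cInc n w i.castSucc = w i := by
  simp [cInc]

theorem cInc_last (n : ℕ) (w : Fin n → ℂ) : cInc n w (Fin.last n) = 0 := by
  simp [cInc]

theorem exists_inc (n : ℕ) : ∃ j : ComplexClifford n →ₐ[ℂ] ComplexClifford (n + 1),
    ∀ w, j (CliffordAlgebra.ι (cQ n) w) = CliffordAlgebra.ι (cQ (n + 1)) (cInc n w) := by
  refine ⟨CliffordAlgebra.lift (cQ n) ⟨(CliffordAlgebra.ι (cQ (n + 1))).comp (cInc n), ?_⟩, ?_⟩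
  · intro m
    rw [LinearMap.comp_apply, CliffordAlgebra.ι_sq_scalar, cQ_apply, cQ_apply,
      Fin.sum_univ_castSucc]
    simp [cInc_castSucc, cInc_last]
  · intro w
    rw [CliffordAlgebra.lift_ι_apply]
    rfl

theorem exists_ext (n : ℕ) {A : Type} [Ring A] [Algebra ℂ A]
    (k : ComplexClifford n →ₐ[ℂ] A) (ω : A) (h1 : ω * ω = 1)
    (h2 : ∀ w, k (CliffordAlgebra.ι (cQ n) w) * ω = -(ω * k (CliffordAlgebra.ι (cQ n) w))) :
    ∃ F : ComplexClifford (n + 1) →ₐ[ℂ] A,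
      ∀ v, F (CliffordAlgebra.ι (cQ (n + 1)) v) =
        k (CliffordAlgebra.ι (cQ n) (fun i => v i.castSucc)) + v (Fin.last n) • ω := by
  let L : (Fin (n + 1) → ℂ) →ₗ[ℂ] A :=
    k.toLinearMap.comp ((CliffordAlgebra.ι (cQ n)).comp (LinearMap.funLeft ℂ ℂ Fin.castSucc))
      + (LinearMap.proj (Fin.last n)).smulRight ω
  have hL : ∀ v, L v =
        k (CliffordAlgebra.ι (cQ n) (fun i => v i.castSucc)) + v (Fin.last n) • ω := fun v => rfl
  refine ⟨CliffordAlgebra.lift (cQ (n + 1)) ⟨L, ?_⟩, ?_⟩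
  · intro v
    rw [hL]
    have h3 := h2 (fun i => v i.castSucc)
    have h4 : k (CliffordAlgebra.ι (cQ n) (fun i => v i.castSucc)) *
        k (CliffordAlgebra.ι (cQ n) (fun i => v i.castSucc))
        = algebraMap ℂ A (cQ n (fun i => v i.castSucc)) := by
      rw [← map_mul, CliffordAlgebra.ι_sq_scalar, AlgHom.commutes]
    rw [mul_add, add_mul, add_mul, h4, smul_mul_assoc, smul_mul_assoc, mul_smul_comm,
      mul_smul_comm, h1, h3, cQ_apply, cQ_apply, Fin.sum_univ_castSucc, map_add, smul_smul,
      Algebra.algebraMap_eq_smul_one (v (Fin.last n) * v (Fin.last n)), smul_neg]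
    abel
  · intro v
    rw [CliffordAlgebra.lift_ι_apply]
    exact hL v

end CliffHelpers

/-- Eq. (16): `Cℂ(2ν+1) ≅ Cℂ(2ν) ⊕ Cℂ(2ν)`. -/
theorem complexClifford_odd_isomorphic_prod (ν : ℕ) :
    Nonempty (ComplexClifford (2 * ν + 1) ≃ₐ[ℂ] ComplexClifford (2 * ν) × ComplexClifford (2 * ν)) := by
  obtain ⟨ω, hω, hanti, hcomm⟩ := exists_omega ν
  obtain ⟨j, hj⟩ := exists_inc (2 * ν)
  obtain ⟨F, hF⟩ := exists_ext (2 * ν)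
    ((AlgHom.id ℂ (ComplexClifford (2 * ν))).prod (AlgHom.id ℂ (ComplexClifford (2 * ν))))
    (ω, -ω) (by simp [hω]) (by intro w; simp [Prod.ext_iff, hanti])
  have hFj : ∀ a, F (j a) = (a, a) := by
    have : F.comp j = (AlgHom.id ℂ _).prod (AlgHom.id ℂ _) := by
      apply CliffordAlgebra.hom_ext
      refine LinearMap.ext (fun w => ?_)
      change F (j (CliffordAlgebra.ι (cQ (2 * ν)) w)) = _
      rw [hj, hF]
      simp only [cInc_castSucc, cInc_last, zero_smul, add_zero]
      rfl
    intro a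
    exact DFunLike.congr_fun this a
  let el : Fin (2 * ν + 1) → ℂ := Pi.single (Fin.last _) 1
  let e := CliffordAlgebra.ι (cQ (2 * ν + 1)) el
  have hFe : F e = (ω, -ω) := by
    have h0 : (fun i : Fin (2 * ν) => el i.castSucc) = 0 := by
      ext i; simp [el, Pi.single_apply, Fin.ext_iff, i.2.ne]
    rw [hF, h0]
    simp [el]
  have hee : e * e = 1 := by
    rw [CliffordAlgebra.ι_sq_scalar, cQ_apply]
    simp [el, Pi.single_apply]
  have hej : ∀ w, e * j (CliffordAlgebra.ι (cQ (2 * ν)) w)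
      = -(j (CliffordAlgebra.ι (cQ (2 * ν)) w) * e) := by
    intro w
    rw [hj]
    apply cQ_anti
    simp [Fin.sum_univ_castSucc, el, cInc_last, Pi.single_apply, Fin.ext_iff, Fin.is_lt, ne_of_lt]
  have heω := hcomm _ j e hej
  have hjω : j ω * j ω = 1 := by rw [← map_mul, hω, map_one]
  have hv : ∀ v, CliffordAlgebra.ι (cQ (2 * ν + 1)) v =
      j (CliffordAlgebra.ι (cQ (2 * ν)) (fun i => v i.castSucc)) + v (Fin.last _) • e := by
    intro v
    rw [hj, ← map_smul, ← map_add]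
    congr 1
    ext i
    refine Fin.lastCases ?_ (fun i => ?_) i
    · simp [cInc_last, el]
    · simp [cInc_castSucc, el, Pi.single_apply, Fin.ext_iff, i.2.ne]
  let Ω : ComplexClifford (2 * ν + 1) := j ω * e
  have hΩj : ∀ a, Ω * j a = j a * Ω := by
    intro a
    induction a using CliffordAlgebra.induction with
    | algebraMap r => rw [AlgHom.commutes]; exact (Algebra.commutes r Ω).symm
    | ι w =>
      have h1 := congrArg j (hanti w)
      rw [map_neg, map_mul, map_mul] at h1
      change j ω * e * _ = _ * (j ω * e)
      rw [mul_assoc, hej w, ← mul_assoc, h1, mul_neg, neg_mul, mul_assoc]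
    | mul a b ha hb => rw [map_mul, ← mul_assoc, ha, mul_assoc, hb, mul_assoc]
    | add a b ha hb => rw [map_add, mul_add, add_mul, ha, hb]
  have hΩ2 : Ω * Ω = 1 := by
    change j ω * e * (j ω * e) = 1
    rw [mul_assoc, ← mul_assoc e, heω, mul_assoc (j ω) e e, hee, mul_one, hjω]
  have hωΩ : j ω * Ω = e := by
    change j ω * (j ω * e) = e
    rw [← mul_assoc, hjω, one_mul]
  have hFΩ : F Ω = (1, -1) := by
    change F (j ω * e) = _
    rw [map_mul, hFj, hFe]; simp [hω]
  have hdec : ∀ x, ∃ a b, x = j a + j b * Ω := by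
    intro x
    induction x using CliffordAlgebra.induction with
    | algebraMap r => exact ⟨algebraMap _ _ r, 0, by simp⟩
    | ι v =>
      refine ⟨CliffordAlgebra.ι (cQ (2 * ν)) (fun i => v i.castSucc), v (Fin.last _) • ω, ?_⟩
      rw [map_smul, smul_mul_assoc, hωΩ]
      exact hv v
    | mul x y hx hy =>
      obtain ⟨a, b, rfl⟩ := hx
      obtain ⟨c, d, rfl⟩ := hy
      refine ⟨a * c + b * d, a * d + b * c, ?_⟩
      have t1 : j b * Ω * j c = j b * j c * Ω := by rw [mul_assoc, hΩj, mul_assoc]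
      have t2 : j b * Ω * (j d * Ω) = j b * j d := by
        rw [← mul_assoc, mul_assoc (j b), hΩj, mul_assoc, mul_assoc, hΩ2, mul_one]
      simp only [mul_add, add_mul, map_add, map_mul, t1, t2]
      simp only [mul_assoc]
      abel
    | add x y hx hy =>
      obtain ⟨a, b, rfl⟩ := hx
      obtain ⟨c, d, rfl⟩ := hy
      exact ⟨a + c, b + d, by simp only [map_add, add_mul]; abel⟩
  have hFab : ∀ a b, F (j a + j b * Ω) = (a + b, a - b) := by
    intro a b
    rw [map_add, map_mul, hFj, hFj, hFΩ]
    simp [sub_eq_add_neg]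
  refine ⟨AlgEquiv.ofBijective F ⟨?_, ?_⟩⟩
  · rw [injective_iff_map_eq_zero]
    intro x hx
    obtain ⟨a, b, rfl⟩ := hdec x
    rw [hFab, Prod.mk_eq_zero] at hx
    obtain ⟨h1, h2⟩ := hx
    have hab : a = b := sub_eq_zero.mp h2
    subst hab
    have : (2 : ℂ) • a = 0 := by rw [two_smul, h1]
    have ha : a = 0 := (smul_eq_zero.mp this).resolve_left two_ne_zero
    simp [ha]
  · rintro ⟨x, y⟩
    refine ⟨j ((2⁻¹ : ℂ) • (x + y)) + j ((2⁻¹ : ℂ) • (x - y)) * Ω, ?_⟩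
    rw [hFab]
    ext1
    · change (2⁻¹ : ℂ) • (x + y) + (2⁻¹ : ℂ) • (x - y) = x
      module
    · change (2⁻¹ : ℂ) • (x + y) - (2⁻¹ : ℂ) • (x - y) = y
      module
end

section
/- The real Clifford algebra Clℝ(w) with n = 3 and w identically +1 (the algebra R₃ with three generators each squaring to +1) is isomorphic as an ℝ-algebra to the algebra Matrix (Fin 2) (Fin 2) ℂ of 2 × 2 complex matrices, regarded as an ℝ-algebra. (The identity R₃ = C₂: R₃ is the algebra of complex quaternions, i.e. hyperbolic biquaternions.) -/
noncomputable section R3aux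

/-- Pauli embedding of the generating space. -/
def pauliMap : (Fin 3 → ℝ) →ₗ[ℝ] Matrix (Fin 2) (Fin 2) ℂ where
  toFun v := !![(⟨v 2, 0⟩ : ℂ), ⟨v 0, -v 1⟩; ⟨v 0, v 1⟩, ⟨-v 2, 0⟩]
  map_add' v w := by
    ext i j
    fin_cases i <;> fin_cases j <;> simp [Complex.ext_iff] <;> ring
  map_smul' r v := by
    ext i j
    fin_cases i <;> fin_cases j <;> simp [Complex.ext_iff]

theorem pauliMap_sq (v : Fin 3 → ℝ) :
    pauliMap v * pauliMap v = algebraMap ℝ (Matrix (Fin 2) (Fin 2) ℂ)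
      (QuadraticMap.weightedSumSquares ℝ (fun _ : Fin 3 => (1 : ℝ)) v) := by
  ext i j
  fin_cases i <;> fin_cases j <;>
    simp [pauliMap, Matrix.mul_apply, Fin.sum_univ_succ, Complex.ext_iff,
      Matrix.algebraMap_matrix_apply, QuadraticMap.weightedSumSquares_apply] <;>
    (try constructor) <;> ring

/-- The candidate inverse, for three elements of an algebra. -/
def backMap {A : Type*} [Ring A] [Algebra ℝ A] (x y z : A) :
    Matrix (Fin 2) (Fin 2) ℂ →ₗ[ℝ] A where
  toFun M :=
    (((M 0 0).re + (M 1 1).re) / 2) • (1 : A) + (((M 0 0).im + (M 1 1).im) / 2) • (x * (y * z))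
    + (((M 0 0).re - (M 1 1).re) / 2) • z + (((M 0 0).im - (M 1 1).im) / 2) • (x * y)
    + (((M 0 1).re + (M 1 0).re) / 2) • x + (((M 0 1).im + (M 1 0).im) / 2) • (y * z)
    + (((M 1 0).im - (M 0 1).im) / 2) • y + (((M 1 0).re - (M 0 1).re) / 2) • (x * z)
  map_add' M N := by
    simp only [Matrix.add_apply, Complex.add_re, Complex.add_im]
    module
  map_smul' r M := by
    simp only [Matrix.smul_apply, Complex.smul_re, Complex.smul_im, RingHom.id_apply, smul_eq_mul]
    module

theorem backMap_mul {A : Type*} [Ring A] [Algebra ℝ A] (x y z : A)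
    (hx : x * x = 1) (hy : y * y = 1) (hz : z * z = 1)
    (hyx : y * x = -(x * y)) (hzx : z * x = -(x * z)) (hzy : z * y = -(y * z))
    (v : Fin 3 → ℝ) (M : Matrix (Fin 2) (Fin 2) ℂ) :
    backMap x y z (pauliMap v * M) = (v 0 • x + v 1 • y + v 2 • z) * backMap x y z M := by
  have hx' : ∀ t, x * (x * t) = t := fun t => by rw [← mul_assoc, hx, one_mul]
  have hy' : ∀ t, y * (y * t) = t := fun t => by rw [← mul_assoc, hy, one_mul]
  have hyx' : ∀ t, y * (x * t) = -(x * (y * t)) := fun t => by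
    rw [← mul_assoc, hyx, neg_mul, mul_assoc]
  have hzx' : ∀ t, z * (x * t) = -(x * (z * t)) := fun t => by
    rw [← mul_assoc, hzx, neg_mul, mul_assoc]
  have hzy' : ∀ t, z * (y * t) = -(y * (z * t)) := fun t => by
    rw [← mul_assoc, hzy, neg_mul, mul_assoc]
  simp only [backMap, pauliMap, LinearMap.coe_mk, AddHom.coe_mk, Matrix.mul_apply,
    Fin.sum_univ_two, Matrix.of_apply, Matrix.cons_val', Matrix.cons_val_zero,
    Matrix.cons_val_one, Matrix.cons_val_fin_one, Complex.add_re, Complex.add_im,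
    Complex.mul_re, Complex.mul_im, add_mul, mul_add, smul_mul_assoc, mul_smul_comm,
    hx, hy, hz, hx', hy', hyx, hzx, hzy, hyx', hzx', hzy', mul_one, mul_neg, neg_neg]
  module

end R3aux

/-- `R₃ = C₂`: the Clifford algebra with three generators squaring to `+1`
is the algebra of complex quaternions (hyperbolic biquaternions), i.e. the
`2 × 2` complex matrices viewed as an `ℝ`-algebra. -/
theorem cliffordAlgebra_R3_isomorphic_complexMatrix :
    Nonempty
      (CliffordAlgebra (QuadraticMap.weightedSumSquares ℝ (fun _ : Fin 3 => (1 : ℝ)))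
        ≃ₐ[ℝ] Matrix (Fin 2) (Fin 2) ℂ) := by
  set Q := QuadraticMap.weightedSumSquares ℝ (fun _ : Fin 3 => (1 : ℝ)) with hQ
  let F := CliffordAlgebra.lift Q ⟨pauliMap, pauliMap_sq⟩
  let e : Fin 3 → CliffordAlgebra Q := fun i => CliffordAlgebra.ι Q (Pi.single i 1)
  have hF : ∀ v, F (CliffordAlgebra.ι Q v) = pauliMap v := fun v => by
    simp [F]
  have hsq : ∀ i, e i * e i = 1 := fun i => by
    simp only [e, CliffordAlgebra.ι_sq_scalar]
    simp [hQ, QuadraticMap.weightedSumSquares_apply, Pi.single_apply]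
  have hanti : ∀ i j, i ≠ j → e i * e j = -(e j * e i) := fun i j hij => by
    rw [eq_neg_iff_add_eq_zero]
    simp only [e, CliffordAlgebra.ι_mul_ι_add_swap]
    have : QuadraticMap.polar Q (Pi.single i 1) (Pi.single j 1) = 0 := by
      simp only [QuadraticMap.polar, hQ, QuadraticMap.weightedSumSquares_apply, Fin.sum_univ_three]
      fin_cases i <;> fin_cases j <;> simp [Pi.single_apply] at hij ⊢
    rw [this, map_zero]
  have hι : ∀ v, CliffordAlgebra.ι Q v = v 0 • e 0 + v 1 • e 1 + v 2 • e 2 := fun v => by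
    simp only [e, ← map_smul, ← map_add]
    congr 1
    ext i
    fin_cases i <;> simp [Pi.single_apply]
  let G := backMap (e 0) (e 1) (e 2)
  have key : ∀ x M, G (F x * M) = x * G M := by
    intro x
    induction x using CliffordAlgebra.induction with
    | algebraMap r =>
      intro M
      rw [AlgHom.commutes, ← Algebra.smul_def, map_smul, Algebra.smul_def]
    | ι v =>
      intro M
      rw [hF, hι]
      exact backMap_mul _ _ _ (hsq 0) (hsq 1) (hsq 2) (hanti _ _ (by decide))
        (hanti _ _ (by decide)) (hanti _ _ (by decide)) v M
    | mul a b ha hb =>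
      intro M
      rw [map_mul F, mul_assoc, ha, hb, mul_assoc]
    | add a b ha hb =>
      intro M
      rw [map_add, add_mul, map_add, ha, hb, add_mul]
  have hG1 : G 1 = 1 := by
    simp [G, backMap]
  have hGF : ∀ x, G (F x) = x := fun x => by
    simpa [hG1] using key x 1
  have hFG : ∀ M, F (G M) = M := fun M => by
    simp only [G, backMap, LinearMap.coe_mk, AddHom.coe_mk, map_add, map_smul, map_mul, map_one,
      e, hF]
    ext i j
    fin_cases i <;> fin_cases j <;>
      simp [pauliMap, Matrix.mul_apply, Fin.sum_univ_two, Complex.ext_iff, Pi.single_apply] <;>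
      (try constructor) <;> ring
  exact ⟨AlgEquiv.ofBijective F
    ⟨Function.LeftInverse.injective hGF, Function.RightInverse.surjective hFG⟩⟩
end

section
/- The real Clifford algebra Clℝ(w) with n = 3 and w identically −1 (the algebra ³R₃ with three generators each squaring to −1) is isomorphic as an ℝ-algebra to the product algebra ℍ × ℍ, the direct sum of two copies of the quaternion algebra over ℝ. (The identity ³R₃ = ²Ω₂: the algebra of elliptic biquaternions, quaternions over the double numbers Ω = ℝ ⊕ ℝ.) -/
set_option linter.unusedSimpArgs false
namespace CliffNegThree

open CliffordAlgebra

abbrev Q : QuadraticForm ℝ (Fin 3 → ℝ) :=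
  QuadraticMap.weightedSumSquares ℝ (fun _ : Fin 3 => (-1 : ℝ))

noncomputable abbrev A := CliffordAlgebra Q

noncomputable def e (i : Fin 3) : CliffordAlgebra Q := ι Q (Pi.single i 1)

theorem e_sq (i : Fin 3) : e i * e i = -1 := by
  unfold e
  rw [ι_sq_scalar]
  have : Q (Pi.single i 1) = -1 := by
    fin_cases i <;> simp [Q, QuadraticMap.weightedSumSquares_apply, Fin.sum_univ_three]
  rw [this]; simp

theorem e_anti (i j : Fin 3) (h : i ≠ j) : e j * e i = -(e i * e j) := by
  unfold e
  apply ι_mul_ι_comm_of_isOrtho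
  rw [QuadraticMap.isOrtho_def]
  fin_cases i <;> fin_cases j <;> simp at h ⊢ <;>
    simp [Q, QuadraticMap.weightedSumSquares_apply, Fin.sum_univ_three]

section gen
variable {R : Type*} [Ring R] {a b c : R}

theorem red1 (h : a * a = -1) (x : R) : a * (a * x) = -x := by
  rw [← mul_assoc, h, neg_one_mul]

theorem red2 (h : b * a = -(a * b)) (x : R) : b * (a * x) = -(a * (b * x)) := by
  rw [← mul_assoc, h, neg_mul, mul_assoc]
end gen

theorem s0 : e 0 * e 0 = -1 := e_sq 0
theorem s1 : e 1 * e 1 = -1 := e_sq 1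
theorem s2 : e 2 * e 2 = -1 := e_sq 2
theorem t10 : e 1 * e 0 = -(e 0 * e 1) := e_anti 0 1 (by decide)
theorem t20 : e 2 * e 0 = -(e 0 * e 2) := e_anti 0 2 (by decide)
theorem t21 : e 2 * e 1 = -(e 1 * e 2) := e_anti 1 2 (by decide)

noncomputable def qb : QuaternionAlgebra.Basis (CliffordAlgebra Q) (-1 : ℝ) 0 (-1) where
  i := e 1 * e 2
  j := e 2 * e 0
  k := e 0 * e 1
  i_mul_i := by
    simp [mul_assoc, s0, s1, s2, t10, t20, t21, red1 s0, red1 s1, red1 s2, red2 t10, red2 t20, red2 t21]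
  j_mul_j := by
    simp [mul_assoc, s0, s1, s2, t10, t20, t21, red1 s0, red1 s1, red1 s2, red2 t10, red2 t20, red2 t21]
  i_mul_j := by
    simp [mul_assoc, s0, s1, s2, t10, t20, t21, red1 s0, red1 s1, red1 s2, red2 t10, red2 t20, red2 t21]
  j_mul_i := by
    simp [mul_assoc, s0, s1, s2, t10, t20, t21, red1 s0, red1 s1, red1 s2, red2 t10, red2 t20, red2 t21]

noncomputable def φ : Quaternion ℝ →ₐ[ℝ] CliffordAlgebra Q := qb.liftHom

theorem φ_apply (x : Quaternion ℝ) : φ x = algebraMap ℝ _ x.re + x.imI • (e 1 * e 2)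
    + x.imJ • (e 2 * e 0) + x.imK • (e 0 * e 1) := rfl

noncomputable def ω : CliffordAlgebra Q := e 0 * (e 1 * e 2)

theorem ω_sq : ω * ω = 1 := by
  unfold ω
  simp [mul_assoc, s0, s1, s2, t10, t20, t21, red1 s0, red1 s1, red1 s2, red2 t10, red2 t20, red2 t21]

theorem ω_comm (x : Quaternion ℝ) : ω * φ x = φ x * ω := by
  rw [φ_apply]
  simp only [mul_add, add_mul, ← Algebra.commutes x.re ω]
  unfold ω
  simp [mul_assoc, s0, s1, s2, t10, t20, t21, red1 s0, red1 s1, red1 s2, red2 t10, red2 t20, red2 t21]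

noncomputable def G : Quaternion ℝ × Quaternion ℝ →ₐ[ℝ] CliffordAlgebra Q :=
  AlgHom.ofLinearMap
    ((1/2 : ℝ) • ((LinearMap.mulRight ℝ (1 - ω)) ∘ₗ φ.toLinearMap ∘ₗ LinearMap.fst ℝ _ _
      + (LinearMap.mulRight ℝ (1 + ω)) ∘ₗ φ.toLinearMap ∘ₗ LinearMap.snd ℝ _ _))
    (by
      simp
      module)
    (by
      intro x y
      have h1 : ω * (φ y.1) = φ y.1 * ω := ω_comm _
      have h2 : ω * (φ y.2) = φ y.2 * ω := ω_comm _
      have k1 : ∀ z, ω * (φ y.1 * z) = φ y.1 * (ω * z) := fun z => by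
        rw [← mul_assoc, h1, mul_assoc]
      have k2 : ∀ z, ω * (φ y.2 * z) = φ y.2 * (ω * z) := fun z => by
        rw [← mul_assoc, h2, mul_assoc]
      simp [mul_add, add_mul, mul_sub, sub_mul, mul_assoc, h1, h2, k1, k2, ω_sq]
      module)

theorem G_apply (x : Quaternion ℝ × Quaternion ℝ) :
    G x = (1/2 : ℝ) • (φ x.1 * (1 - ω) + φ x.2 * (1 + ω)) := rfl

noncomputable def mk (a b c : ℝ) : Quaternion ℝ := ⟨0, a, b, c⟩

@[simp] theorem mk_re (a b c : ℝ) : (mk a b c).re = 0 := rfl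
@[simp] theorem mk_imI (a b c : ℝ) : (mk a b c).imI = a := rfl
@[simp] theorem mk_imJ (a b c : ℝ) : (mk a b c).imJ = b := rfl
@[simp] theorem mk_imK (a b c : ℝ) : (mk a b c).imK = c := rfl

@[simp] theorem one_re' : (1 : Quaternion ℝ).re = 1 := rfl
@[simp] theorem one_imI' : (1 : Quaternion ℝ).imI = 0 := rfl
@[simp] theorem one_imJ' : (1 : Quaternion ℝ).imJ = 0 := rfl
@[simp] theorem one_imK' : (1 : Quaternion ℝ).imK = 0 := rfl

noncomputable def f : (Fin 3 → ℝ) →ₗ[ℝ] Quaternion ℝ × Quaternion ℝ where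
  toFun v := (mk (v 0) (v 1) (v 2), mk (-v 0) (-v 1) (-v 2))
  map_add' x y := by
    ext <;> simp <;> ring
  map_smul' r x := by
    ext <;> simp

noncomputable def F : CliffordAlgebra Q →ₐ[ℝ] Quaternion ℝ × Quaternion ℝ :=
  CliffordAlgebra.lift Q ⟨f, fun v => by
    ext <;> simp [f, Q, QuadraticMap.weightedSumSquares_apply, Fin.sum_univ_three] <;> ring⟩

theorem F_e (i : Fin 3) : F (e i) = f (Pi.single i 1) := by
  unfold F e
  rw [lift_ι_apply]

theorem F_ω : F ω = (-1, 1) := by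
  unfold ω
  simp only [map_mul, F_e]
  ext <;> simp [f]

theorem F_φ (x : Quaternion ℝ) : F (φ x) = (x, x) := by
  rw [φ_apply]
  simp only [map_mul, map_add, map_smul, F_e, AlgHom.commutes]
  ext <;> simp [f]

theorem FG (x : Quaternion ℝ × Quaternion ℝ) : F (G x) = x := by
  rw [G_apply]
  simp only [map_mul, map_add, map_sub, map_smul, map_one, F_ω, F_φ]
  ext <;> simp <;> ring

theorem GF : G.comp F = AlgHom.id ℝ _ := by
  apply CliffordAlgebra.hom_ext
  apply LinearMap.pi_ext'
  intro i
  ext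
  change G (F (e i)) = e i
  rw [F_e, G_apply, φ_apply, φ_apply]
  fin_cases i <;>
  simp [f, ω, mul_add, mul_sub, mul_assoc, s0, s1, s2, t10, t20, t21, red1 s0, red1 s1, red1 s2, red2 t10, red2 t20, red2 t21] <;> module

end CliffNegThree

/-- `³R₃ = ²Ω₂`: the Clifford algebra with three generators squaring to `-1`
is the algebra of elliptic biquaternions, `ℍ ⊕ ℍ`. -/
theorem cliffordAlgebra_neg_R3_isomorphic_quaternion_prod :
    Nonempty
      (CliffordAlgebra (QuadraticMap.weightedSumSquares ℝ (fun _ : Fin 3 => (-1 : ℝ)))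
        ≃ₐ[ℝ] Quaternion ℝ × Quaternion ℝ) :=
  ⟨AlgEquiv.ofAlgHom CliffNegThree.F CliffNegThree.G
    (AlgHom.ext CliffNegThree.FG) CliffNegThree.GF⟩
end

section
/- For every natural number m ≥ 1, the real Clifford algebra Clℝ(w) with n = 4m − 1 generators and w identically +1 (the algebra R_{4m−1}) is isomorphic as an ℝ-algebra to the complex Clifford algebra Cℂ(4m − 2) regarded as an ℝ-algebra (via restriction of scalars along ℝ ⊆ ℂ). (The first identity of equation (7): R_{4m'−1} = C_{4m'−2}.) -/
namespace CliffAux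

section lists
variable {R : Type*} [Ring R]

theorem anti_prod (y : R) (l : List R) (h : ∀ x ∈ l, y * x = -(x * y)) :
    y * l.prod = (-1) ^ l.length * (l.prod * y) := by
  induction l with
  | nil => simp
  | cons a l ih =>
    have h1 := h a (by simp)
    have h2 := ih (fun x hx => h x (by simp [hx]))
    rw [List.prod_cons, ← mul_assoc, h1, neg_mul, mul_assoc, h2, List.length_cons, pow_succ]
    rcases neg_one_pow_eq_or R l.length with h | h <;> simp [h, mul_assoc]

theorem sq_prod (l : List R) (h : ∀ x ∈ l, x * x = 1)
    (hp : l.Pairwise (fun x y => x * y = -(y * x))) :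
    l.prod * l.prod = (-1) ^ (l.length.choose 2) := by
  induction l with
  | nil => simp
  | cons a l ih =>
    rw [List.pairwise_cons] at hp
    have h1 := anti_prod a l hp.1
    have h2 := ih (fun x hx => h x (by simp [hx])) hp.2
    have h3 := h a (by simp)
    have h4 : l.prod * a = (-1) ^ l.length * (a * l.prod) := by
      rw [h1, ← mul_assoc, ← pow_add, ← two_mul, pow_mul]; simp
    have e : (l.length + 1).choose 2 = l.length + l.length.choose 2 := by
      simp [Nat.choose_succ_succ']
    rw [List.prod_cons, List.length_cons, e, pow_add, ← h2]
    calc a * l.prod * (a * l.prod) = a * (l.prod * a) * l.prod := by noncomm_ring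
      _ = _ := by
        rw [h4]
        rcases neg_one_pow_eq_or R l.length with h | h <;> rw [h] <;>
          simp only [one_mul, neg_mul, mul_neg, ← mul_assoc, h3]

theorem mem_prod (a : R) (l : List R) (h : ∀ x ∈ l, x * x = 1)
    (hp : l.Pairwise (fun x y => x * y = -(y * x))) (ha : a ∈ l) :
    a * l.prod = (-1) ^ (l.length + 1) * (l.prod * a) := by
  induction l with
  | nil => simp at ha
  | cons b l ih =>
    rw [List.pairwise_cons] at hp
    rw [List.prod_cons, List.length_cons]
    rcases List.mem_cons.1 ha with rfl | ha
    · have h1 := anti_prod a l hp.1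
      conv_lhs => rw [h1]
      rcases neg_one_pow_eq_or R l.length with h | h <;> simp [h, pow_succ, mul_assoc]
    · have h2 := ih (fun x hx => h x (by simp [hx])) hp.2 ha
      have h3 := hp.1 a ha
      have h4 : a * b = -(b * a) := by rw [h3, neg_neg]
      rw [← mul_assoc, h4, neg_mul, mul_assoc, h2]
      rcases neg_one_pow_eq_or R l.length with h | h <;> simp [h, pow_succ, mul_assoc]

end lists

section fam
variable {R : Type*} [Ring R]

/-- Product of a family. -/
def P {k : ℕ} (g : Fin k → R) : R := (List.ofFn g).prod

/-- Clifford generators. -/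
def Gen {ι : Type*} (g : ι → R) : Prop :=
  (∀ i, g i * g i = 1) ∧ ∀ i j, i ≠ j → g i * g j = -(g j * g i)

theorem Gen.pw {k : ℕ} {g : Fin k → R} (hg : Gen g) :
    (List.ofFn g).Pairwise (fun x y => x * y = -(y * x)) := by
  rw [List.pairwise_ofFn]
  exact fun i j hij => hg.2 i j hij.ne

theorem Gen.sqs {k : ℕ} {g : Fin k → R} (hg : Gen g) : ∀ x ∈ List.ofFn g, x * x = 1 := by
  intro x hx
  obtain ⟨i, rfl⟩ := List.mem_ofFn.1 hx
  exact hg.1 i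

theorem Gen.P_sq {k : ℕ} {g : Fin k → R} (hg : Gen g) (hk : k % 4 = 2) : P g * P g = -1 := by
  rw [P, sq_prod _ hg.sqs hg.pw, List.length_ofFn]
  apply Odd.neg_one_pow
  obtain ⟨j, rfl⟩ : ∃ j, k = 4 * j + 2 := ⟨k / 4, by omega⟩
  rw [Nat.choose_two_right]
  have : (4 * j + 2) * (4 * j + 2 - 1) / 2 = (2 * j + 1) * (4 * j + 1) := by
    apply Nat.div_eq_of_eq_mul_left (by norm_num)
    rw [show 4 * j + 2 - 1 = 4 * j + 1 by omega]; ring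
  rw [this]
  exact Odd.mul ⟨j, rfl⟩ ⟨2 * j, by ring⟩

theorem Gen.mem_P {k : ℕ} {g : Fin k → R} (hg : Gen g) (hk : k % 4 = 2) (i : Fin k) :
    g i * P g = -(P g * g i) := by
  have := mem_prod (g i) _ hg.sqs hg.pw (List.mem_ofFn.2 ⟨i, rfl⟩)
  rw [P, this, List.length_ofFn, Odd.neg_one_pow ⟨k / 2, by omega⟩]; simp

theorem anti_P {k : ℕ} {g : Fin k → R} (hk : k % 4 = 2) (y : R)
    (h : ∀ i, y * g i = -(g i * y)) : y * P g = P g * y := by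
  have := anti_prod y (List.ofFn g) (by
    intro x hx
    obtain ⟨i, rfl⟩ := List.mem_ofFn.1 hx
    exact h i)
  rw [P, this, List.length_ofFn, Even.neg_one_pow ⟨k / 2, by omega⟩]; simp

theorem map_P {S F : Type*} [Ring S] [FunLike F R S] [RingHomClass F R S] (f : F) {k : ℕ}
    (g : Fin k → R) : f (P g) = P (fun i => f (g i)) := by
  rw [P, P, map_list_prod, List.map_ofFn]; rfl

theorem Gen.sum_sq {K ι : Type*} [CommRing K] [Algebra K R] {g : ι → R} (hg : Gen g)
    (v : ι → K) (s : Finset ι) :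
    (∑ i ∈ s, v i • g i) * (∑ i ∈ s, v i • g i) = algebraMap K R (∑ i ∈ s, v i * v i) := by
  classical
  induction s using Finset.induction_on with
  | empty => simp
  | insert a s ha ih =>
    rw [Finset.sum_insert ha, Finset.sum_insert ha, map_add, ← ih]
    have h1 : (v a • g a) * (∑ i ∈ s, v i • g i) = - ((∑ i ∈ s, v i • g i) * (v a • g a)) := by
      rw [Finset.mul_sum, Finset.sum_mul, ← Finset.sum_neg_distrib]
      refine Finset.sum_congr rfl fun i hi => ?_
      rw [smul_mul_smul_comm, smul_mul_smul_comm, hg.2 a i (by rintro rfl; exact ha hi),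
        smul_neg, mul_comm]
    have h2 : (v a • g a) * (v a • g a) = algebraMap K R (v a * v a) := by
      rw [smul_mul_smul_comm, hg.1, Algebra.algebraMap_eq_smul_one]
    rw [add_mul, mul_add, mul_add, h1, h2]
    abel

end fam

section cl

/-- The Clifford algebra. -/
abbrev Cl (K : Type) [CommRing K] (n : ℕ) :=
  CliffordAlgebra (QuadraticMap.weightedSumSquares K (fun _ : Fin n => (1 : K)))

variable {K : Type} [CommRing K] {n : ℕ}

/-- generators -/
def e (K : Type) [CommRing K] (n : ℕ) (i : Fin n) : Cl K n :=
  CliffordAlgebra.ι _ (Pi.single i 1)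

theorem ι_eq (v : Fin n → K) :
    CliffordAlgebra.ι (QuadraticMap.weightedSumSquares K (fun _ : Fin n => (1 : K))) v
      = ∑ i, v i • e K n i := by
  conv_lhs => rw [← LinearMap.sum_single_apply (fun _ => K) v]
  rw [map_sum]
  refine Finset.sum_congr rfl fun i _ => ?_
  rw [e, ← map_smul]
  congr 1
  ext j
  simp [Pi.single_apply]

theorem gen_e : Gen (e K n) := by
  constructor
  · intro i
    rw [e, CliffordAlgebra.ι_sq_scalar]
    simp [QuadraticMap.weightedSumSquares_apply, Pi.single_apply]
  · intro i j hij
    rw [eq_neg_iff_add_eq_zero, e, e]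
    apply CliffordAlgebra.ι_mul_ι_add_swap_of_isOrtho
    rw [QuadraticMap.isOrtho_def]
    simp only [QuadraticMap.weightedSumSquares_apply, ← Finset.sum_add_distrib]
    refine Finset.sum_congr rfl fun l _ => ?_
    simp only [Pi.add_apply, Pi.single_apply]
    split_ifs with h1 h2 <;> simp_all

theorem exists_lift {A : Type*} [Ring A] [Algebra K A] {g : Fin n → A} (hg : Gen g) :
    ∃ φ : Cl K n →ₐ[K] A, ∀ i, φ (e K n i) = g i := by
  refine ⟨CliffordAlgebra.lift _ ⟨Fintype.linearCombination K g, fun v => ?_⟩, fun i => ?_⟩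
  · rw [Fintype.linearCombination_apply, hg.sum_sq, QuadraticMap.weightedSumSquares_apply]
    simp
  · rw [e, CliffordAlgebra.lift_ι_apply, Fintype.linearCombination_apply_single, one_smul]

theorem exists_lift_complex {A : Type*} [Ring A] [Algebra ℝ A] {g : Fin n → A} (hg : Gen g)
    (w : A) (hw : w * w = -1) (hc : ∀ a, w * a = a * w) :
    ∃ ψ : Cl ℂ n →+* A, (∀ i, ψ (e ℂ n i) = g i) ∧ (∀ r : ℝ, ψ (algebraMap ℂ _ r) =
      algebraMap ℝ A r) ∧ ψ (algebraMap ℂ _ Complex.I) = w := by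
  let f : ℂ →ₐ[ℝ] A := Complex.lift ⟨w, hw⟩
  have hfI : f Complex.I = w := by simp [f]
  let _ : Algebra ℂ A := f.toRingHom.toAlgebra' (by
    intro c x
    change f c * x = x * f c
    simp only [f, Complex.lift_apply, Complex.liftAux_apply, add_mul, mul_add, smul_mul_assoc,
      mul_smul_comm, hc, Algebra.commutes])
  obtain ⟨φ, hφ⟩ := exists_lift (K := ℂ) hg
  refine ⟨φ.toRingHom, hφ, fun r => ?_, ?_⟩
  · refine (φ.commutes _).trans ?_
    exact f.commutes r
  · refine (φ.commutes _).trans ?_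
    exact hfI

theorem hom_ext' {A : Type*} [Ring A] (f g : Cl K n →+* A)
    (h1 : ∀ r, f (algebraMap K _ r) = g (algebraMap K _ r))
    (h2 : ∀ i, f (e K n i) = g (e K n i)) : ∀ x, f x = g x := by
  intro x
  induction x using CliffordAlgebra.induction with
  | algebraMap r => exact h1 r
  | ι v => simp only [ι_eq, map_sum, Algebra.smul_def, map_mul, h1, h2]
  | mul a b ha hb => simp only [map_mul, ha, hb]
  | add a b ha hb => simp only [map_add, ha, hb]

theorem main (k : ℕ) (hk : k % 4 = 2) :
    ∃ E : Cl ℝ (k + 1) ≃+* Cl ℂ k, ∀ r : ℝ, E (algebraMap ℝ _ r) = algebraMap ℂ _ (r : ℂ) := by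
  have hE : Gen (e ℂ k) := gen_e
  have he : Gen (e ℝ (k + 1)) := gen_e
  set J : Cl ℂ k := algebraMap ℂ _ Complex.I with hJ
  have hJJ : J * J = -1 := by rw [hJ, ← map_mul]; simp
  have hJc : ∀ a, J * a = a * J := fun a => Algebra.commutes _ _
  have hPP := hE.P_sq hk
  have hEP := hE.mem_P hk
  -- the forward family
  have hG : Gen (Fin.snoc (α := fun _ => Cl ℂ k) (e ℂ k) (J * P (e ℂ k))) := by
    constructor
    · intro i
      refine Fin.lastCases ?_ (fun i => ?_) i
      · rw [Fin.snoc_last, mul_assoc, ← mul_assoc (P _), ← hJc, mul_assoc, hPP, ← mul_assoc, hJJ]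
        simp
      · rw [Fin.snoc_castSucc]; exact hE.1 i
    · intro i j
      refine Fin.lastCases ?_ (fun i => ?_) i <;> refine Fin.lastCases ?_ (fun j => ?_) j
      · intro h; exact absurd rfl h
      · intro _
        rw [Fin.snoc_last, Fin.snoc_castSucc, ← mul_assoc, ← hJc, mul_assoc, mul_assoc, hEP,
          mul_neg, neg_neg]
      · intro _
        rw [Fin.snoc_last, Fin.snoc_castSucc, ← mul_assoc, ← hJc, mul_assoc, mul_assoc, hEP,
          mul_neg]
      · intro h
        rw [Fin.snoc_castSucc, Fin.snoc_castSucc]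
        exact hE.2 i j (by rintro rfl; exact h rfl)
  obtain ⟨φ, hφ⟩ := exists_lift (K := ℝ) hG
  have hφi : ∀ i : Fin k, φ (e ℝ (k + 1) i.castSucc) = e ℂ k i := fun i => by
    rw [hφ, Fin.snoc_castSucc]
  have hφl : φ (e ℝ (k + 1) (Fin.last k)) = J * P (e ℂ k) := by rw [hφ, Fin.snoc_last]
  have hφr : ∀ r : ℝ, φ (algebraMap ℝ _ r) = algebraMap ℂ _ (r : ℂ) := fun r => by
    rw [φ.commutes, IsScalarTower.algebraMap_apply ℝ ℂ (Cl ℂ k)]; rfl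
  -- backward
  let g : Fin k → Cl ℝ (k + 1) := fun i => e ℝ (k + 1) i.castSucc
  have hg : Gen g := ⟨fun i => he.1 _, fun i j h => he.2 _ _ (by simpa using h)⟩
  let t := e ℝ (k + 1) (Fin.last k)
  have htg : ∀ i, t * g i = -(g i * t) := fun i => he.2 _ _ (Fin.castSucc_lt_last i).ne'
  have htt : t * t = 1 := he.1 _
  have htP : t * P g = P g * t := anti_P hk t htg
  have hgP := hg.mem_P hk
  have hQQ := hg.P_sq hk
  let w := -(t * P g)
  have hww : w * w = -1 := by
    calc w * w = t * (P g * t) * P g := by simp only [w]; noncomm_ring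
      _ = (t * t) * (P g * P g) := by rw [← htP]; noncomm_ring
      _ = -1 := by rw [htt, hQQ, one_mul]
  have hwc : ∀ a, w * a = a * w := by
    intro a
    induction a using CliffordAlgebra.induction with
    | algebraMap r => exact (Algebra.commutes _ _).symm
    | ι v =>
      rw [ι_eq, Finset.mul_sum, Finset.sum_mul]
      refine Finset.sum_congr rfl fun i _ => ?_
      rw [mul_smul_comm, smul_mul_assoc]
      congr 1
      refine Fin.lastCases ?_ (fun i => ?_) i
      · change w * t = t * w
        simp only [w, neg_mul, mul_neg, mul_assoc, ← htP]
      · change w * g i = g i * w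
        simp only [w, neg_mul, mul_neg]
        rw [← mul_assoc (g i), ← neg_neg (g i * t), ← htg, neg_mul, mul_assoc, mul_assoc, hgP]
        simp
    | mul a b ha hb => rw [← mul_assoc, ha, mul_assoc, hb, mul_assoc]
    | add a b ha hb => rw [mul_add, add_mul, ha, hb]
  obtain ⟨ψ, hψi, hψr, hψI⟩ := exists_lift_complex hg w hww hwc
  have hφP : φ (P g) = P (e ℂ k) := by
    rw [map_P]; congr 1; ext i; exact hφi i
  have hψP : ψ (P (e ℂ k)) = P g := by
    rw [map_P]; congr 1; ext i; exact hψi i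
  have hφw : φ w = J := by
    simp only [w]
    rw [map_neg, map_mul, hφl, hφP, mul_assoc, hPP]; simp
  have h1 : ∀ x, (ψ.comp φ.toRingHom) x = (RingHom.id _) x := by
    apply hom_ext'
    · intro r
      change ψ (φ _) = _
      rw [hφr, hψr]; rfl
    · intro i
      change ψ (φ _) = _
      refine Fin.lastCases ?_ (fun i => ?_) i
      · rw [hφl, map_mul, hψI, hψP]
        simp only [w]
        rw [neg_mul, mul_assoc, hQQ]; simp [t]
      · rw [hφi, hψi]; rfl
  have h2 : ∀ x, (φ.toRingHom.comp ψ) x = (RingHom.id _) x := by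
    apply hom_ext'
    · intro z
      change φ (ψ _) = _
      conv_lhs => rw [← Complex.re_add_im z]
      rw [map_add, map_mul, map_add, map_mul, hψr, hψr, hψI, map_add, map_mul, hφw, hφr, hφr, hJ,
        ← map_mul, ← map_add, Complex.re_add_im]; rfl
    · intro i
      change φ (ψ _) = _
      rw [hψi]; exact hφi i
  exact ⟨RingEquiv.ofRingHom φ.toRingHom ψ (RingHom.ext h2) (RingHom.ext h1), hφr⟩

end cl

end CliffAux

/-- First identity of eq. (7): `R_{4m−1} = C_{4m−2}`, i.e. the real Clifford
algebra with `4m − 1` generators squaring to `+1` is isomorphic, as an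
`ℝ`-algebra, to the complex Clifford algebra `Cℂ(4m − 2)` with scalars
restricted from `ℂ` to `ℝ`. -/
theorem cliffordAlgebra_four_mul_sub_one_isomorphic_complexClifford (m : ℕ) (hm : 1 ≤ m) :
    Nonempty
      (CliffordAlgebra (QuadraticMap.weightedSumSquares ℝ (fun _ : Fin (4 * m - 1) => (1 : ℝ)))
        ≃ₐ[ℝ] RestrictScalars ℝ ℂ
          (CliffordAlgebra (QuadraticMap.weightedSumSquares ℂ (fun _ : Fin (4 * m - 2) => (1 : ℂ))))) := by
  obtain ⟨k, hk, h1, h2⟩ : ∃ k, k % 4 = 2 ∧ 4 * m - 1 = k + 1 ∧ 4 * m - 2 = k :=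
    ⟨4 * m - 2, by omega, by omega, rfl⟩
  rw [h1, h2]
  obtain ⟨E, hE⟩ := CliffAux.main k hk
  exact ⟨AlgEquiv.ofRingEquiv (f := E.trans (RestrictScalars.ringEquiv ℝ ℂ _).symm)
    (fun r => hE r)⟩
end

section
/- For every natural number m ≥ 1, the real Clifford algebra Clℝ(w) with n = 4m + 1 generators and w identically +1 (the algebra R_{4m+1}) is isomorphic as an ℝ-algebra to the product algebra Clℝ(w') × Clℝ(w'), where w' is identically +1 on Fin (4m); i.e. R_{4m+1} is the direct sum of two copies of R_{4m}. (The second identity of equation (7): R_{4m'+1} = Ω_{4m'}, the Clifford algebra over the double numbers Ω = ℝ ⊕ ℝ; the splitting is realized by the central idempotents (1 ± ω)/2 built from the volume element, which squares to +1.) -/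
namespace CliffSplit

open CliffordAlgebra

/-- The standard positive definite form. -/
noncomputable abbrev Q (n : ℕ) : QuadraticForm ℝ (Fin n → ℝ) :=
  QuadraticMap.weightedSumSquares ℝ (fun _ : Fin n => (1 : ℝ))

/-- Iterated products. -/
noncomputable def P {A : Type*} [Ring A] (f : ℕ → A) : ℕ → A
  | 0 => 1
  | n + 1 => P f n * f n

section
variable {A : Type*} [Ring A] [Algebra ℝ A] (f : ℕ → A)

lemma P_ge (hf : ∀ i j, i ≠ j → f i * f j = -(f j * f i)) (n k : ℕ) (h : n ≤ k) :
    f k * P f n = (-1 : ℝ) ^ n • (P f n * f k) := by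
  induction n with
  | zero => simp [P]
  | succ n ih =>
    rw [P, ← mul_assoc, ih (by omega), smul_mul_assoc, mul_assoc, hf k n (by omega), mul_neg,
      pow_succ, mul_assoc]
    simp

lemma P_lt (hf : ∀ i j, i ≠ j → f i * f j = -(f j * f i)) (n k : ℕ) (h : k < n) :
    f k * P f n = -((-1 : ℝ) ^ n • (P f n * f k)) := by
  induction n with
  | zero => omega
  | succ n ih =>
    rcases Nat.lt_succ_iff_lt_or_eq.mp h with h | rfl
    · rw [P, ← mul_assoc, ih h, neg_mul, smul_mul_assoc, mul_assoc, hf k n (by omega), mul_neg,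
        pow_succ, mul_assoc]
      simp
    · rw [P, ← mul_assoc, P_ge f hf k k le_rfl, smul_mul_assoc, pow_succ]
      simp

lemma P_sq_succ (hf : ∀ i j, i ≠ j → f i * f j = -(f j * f i)) (n : ℕ) (h1 : f n * f n = 1) :
    P f (n + 1) * P f (n + 1) = (-1 : ℝ) ^ n • (P f n * P f n) := by
  have h : P f (n + 1) * P f (n + 1) = P f n * (f n * P f n) * f n := by
    simp only [P, mul_assoc]
  rw [h, P_ge f hf n n le_rfl, mul_smul_comm, smul_mul_assoc]
  rw [mul_assoc, mul_assoc, h1, mul_one]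

lemma P_sq (hf : ∀ i j, i ≠ j → f i * f j = -(f j * f i)) (N : ℕ)
    (h1 : ∀ i < N, f i * f i = 1) (m : ℕ) (hm : 4 * m ≤ N) :
    P f (4 * m) * P f (4 * m) = 1 := by
  induction m with
  | zero => simp [P]
  | succ m ih =>
    rw [show 4 * (m + 1) = 4 * m + 1 + 1 + 1 + 1 by ring,
      P_sq_succ f hf _ (h1 _ (by omega)), P_sq_succ f hf _ (h1 _ (by omega)),
      P_sq_succ f hf _ (h1 _ (by omega)), P_sq_succ f hf _ (h1 _ (by omega)), ih (by omega)]
    simp [pow_succ, pow_mul]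

end

lemma exists_omega (m : ℕ) : ∃ ω : CliffordAlgebra (Q (4 * m)), ω * ω = 1 ∧
    (∀ x, ω * ι (Q (4 * m)) x = -(ι (Q (4 * m)) x * ω)) ∧ involute ω = ω := by
  let f : ℕ → CliffordAlgebra (Q (4 * m)) := fun i =>
    if h : i < 4 * m then ι (Q (4 * m)) (Pi.single ⟨i, h⟩ 1) else 0
  have hf : ∀ i j, i ≠ j → f i * f j = -(f j * f i) := by
    intro i j hij
    simp only [f]
    split_ifs with h1 h2
    · apply ι_mul_ι_comm_of_isOrtho
      rw [QuadraticMap.isOrtho_def]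
      simp only [QuadraticMap.weightedSumSquares_apply, ← Finset.sum_add_distrib]
      refine Finset.sum_congr rfl fun k _ => ?_
      by_cases hk : k = ⟨i, h1⟩
      · have : k ≠ ⟨j, h2⟩ := by rw [hk]; simpa using hij
        simp [Pi.single_apply, hk, hij]
      · simp [Pi.single_apply, hk]
    all_goals simp
  have h1 : ∀ i < 4 * m, f i * f i = 1 := by
    intro i hi
    simp only [f, hi, dif_pos, ι_sq_scalar]
    simp [QuadraticMap.weightedSumSquares_apply, Pi.single_apply]
  have hinv : ∀ n, involute (P f n) = (-1 : ℝ) ^ n • P f n := by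
    intro n
    induction n with
    | zero => simp [P]
    | succ n ih =>
      have : involute (f n) = - f n := by
        simp only [f]; split_ifs <;> simp
      rw [P, map_mul, ih, this, pow_succ]; simp
  have hp : (-1 : ℝ) ^ (4 * m) = 1 := Even.neg_one_pow ⟨2 * m, by ring⟩
  refine ⟨P f (4 * m), P_sq f hf _ h1 m le_rfl, ?_, by rw [hinv, hp, one_smul]⟩
  have key : (LinearMap.mulLeft ℝ (P f (4 * m))) ∘ₗ ι (Q (4 * m)) =
      -((LinearMap.mulRight ℝ (P f (4 * m))) ∘ₗ ι (Q (4 * m))) := by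
    refine LinearMap.pi_ext' fun i => LinearMap.ext_ring ?_
    have := P_lt f hf (4 * m) i i.2
    rw [hp, one_smul] at this
    simp only [f, i.2, dif_pos] at this
    simp only [LinearMap.comp_apply, LinearMap.neg_apply, LinearMap.mulLeft_apply,
      LinearMap.mulRight_apply, LinearMap.single_apply]
    exact (neg_eq_iff_eq_neg.mpr this).symm
  intro x
  exact LinearMap.congr_fun key x

/-- Extension by zero. -/
noncomputable def emb (n : ℕ) : Q n →qᵢ Q (n + 1) where
  toFun x := Fin.snoc x 0
  map_add' x y := by
    ext i; refine Fin.lastCases ?_ (fun i => ?_) i <;> simp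
  map_smul' c x := by
    ext i; refine Fin.lastCases ?_ (fun i => ?_) i <;> simp
  map_app' x := by
    simp [QuadraticMap.weightedSumSquares_apply, Fin.sum_univ_castSucc]

lemma emb_apply (n : ℕ) (x : Fin n → ℝ) :
    emb n x = (Fin.snoc x 0 : Fin (n + 1) → ℝ) := rfl

theorem split (n : ℕ) (ω : CliffordAlgebra (Q n)) (hsq : ω * ω = 1)
    (hanti : ∀ x, ω * ι (Q n) x = -(ι (Q n) x * ω)) (hinv : involute ω = ω) :
    Nonempty (CliffordAlgebra (Q (n + 1)) ≃ₐ[ℝ] CliffordAlgebra (Q n) × CliffordAlgebra (Q n)) := by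
  -- forward maps
  have fw : ∀ s : ℝ, s * s = 1 → ∃ F : CliffordAlgebra (Q (n + 1)) →ₐ[ℝ] CliffordAlgebra (Q n),
      ∀ x, F (ι _ x) = ι (Q n) (Fin.init x) + (s * x (Fin.last n)) • ω := by
    intro s hs
    let r : (Fin (n + 1) → ℝ) →ₗ[ℝ] (Fin n → ℝ) := LinearMap.funLeft ℝ ℝ Fin.castSucc
    let l : (Fin (n + 1) → ℝ) →ₗ[ℝ] CliffordAlgebra (Q n) :=
      ι (Q n) ∘ₗ r + (s • LinearMap.proj (Fin.last n) : (Fin (n + 1) → ℝ) →ₗ[ℝ] ℝ).smulRight ω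
    have hl : ∀ x, l x = ι (Q n) (Fin.init x) + (s * x (Fin.last n)) • ω := fun x => rfl
    refine ⟨lift _ ⟨l, fun x => ?_⟩, fun x => ?_⟩
    · rw [hl]
      have hx : Q (n + 1) x = Q n (Fin.init x) + x (Fin.last n) * x (Fin.last n) := by
        simp [QuadraticMap.weightedSumSquares_apply, Fin.sum_univ_castSucc, Fin.init]
      rw [hx, add_mul, mul_add, mul_add, ι_sq_scalar, smul_mul_smul_comm, hsq, mul_smul_comm,
        smul_mul_assoc, hanti, map_add, mul_mul_mul_comm, hs, one_mul,
        Algebra.algebraMap_eq_smul_one (x (Fin.last n) * x (Fin.last n))]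
      simp only [smul_neg]
      abel
    · rw [lift_ι_apply, hl]
  obtain ⟨F₁, hF₁⟩ := fw 1 (by norm_num)
  obtain ⟨F₂, hF₂⟩ := fw (-1) (by norm_num)
  let F := F₁.prod F₂
  let j := CliffordAlgebra.map (emb n)
  have hj : ∀ x, j (ι _ x) = ι (Q (n + 1)) (Fin.snoc x 0 : Fin (n + 1) → ℝ) := fun x => by
    simp only [j, map_apply_ι, emb_apply]
  let e : CliffordAlgebra (Q (n + 1)) := ι _ (Pi.single (Fin.last n) 1)
  have he : e * e = 1 := by
    simp only [e, ι_sq_scalar]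
    simp [QuadraticMap.weightedSumSquares_apply, Pi.single_apply]
  have hej : ∀ a, e * j a = j (involute a) * e := by
    intro a
    induction a using CliffordAlgebra.induction with
    | algebraMap r => simp [Algebra.commutes]
    | ι x =>
      rw [involute_ι, map_neg, hj, neg_mul]
      apply ι_mul_ι_comm_of_isOrtho
      rw [QuadraticMap.isOrtho_def]
      simp [QuadraticMap.weightedSumSquares_apply, Fin.sum_univ_castSucc, Pi.single_apply,
        add_comm]
    | mul a b ha hb => rw [map_mul, ← mul_assoc, ha, mul_assoc, hb, map_mul, map_mul, mul_assoc]
    | add a b ha hb => rw [map_add, mul_add, ha, hb, map_add, map_add, add_mul]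
  have hanti' : ∀ a, ω * a = involute a * ω := by
    intro a
    induction a using CliffordAlgebra.induction with
    | algebraMap r => simp [Algebra.commutes]
    | ι x => rw [involute_ι, hanti, neg_mul]
    | mul a b ha hb => rw [← mul_assoc, ha, mul_assoc, hb, map_mul, mul_assoc]
    | add a b ha hb => rw [mul_add, ha, hb, map_add, add_mul]
  let z := j ω * e
  have hz : z * z = 1 := by
    simp only [z]
    rw [mul_assoc, ← mul_assoc e, hej, hinv, mul_assoc, he, mul_one, ← map_mul, hsq, map_one]
  have hzj : ∀ a, z * j a = j a * z := by
    intro a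
    simp only [z]
    rw [mul_assoc, hej, ← mul_assoc, ← map_mul, hanti', involute_involute, map_mul, mul_assoc]
  -- backward map
  let p := (2⁻¹ : ℝ) • (1 + z)
  let q := (2⁻¹ : ℝ) • (1 - z)
  have hpq : p + q = 1 := by simp only [p, q]; module
  have hpmq : p - q = z := by simp only [p, q]; module
  have hpp : p * p = p := by
    simp only [p]
    simp only [smul_mul_smul_comm, add_mul, mul_add, hz, one_mul, mul_one]; module
  have hqq : q * q = q := by
    simp only [q]
    simp only [smul_mul_smul_comm, sub_mul, mul_sub, hz, one_mul, mul_one]; module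
  have hp_q : p * q = 0 := by
    simp only [p, q]
    simp only [smul_mul_smul_comm, add_mul, mul_sub, hz, one_mul, mul_one]; module
  have hq_p : q * p = 0 := by
    simp only [p, q]
    simp only [smul_mul_smul_comm, sub_mul, mul_add, hz, one_mul, mul_one]; module
  have hpj : ∀ a, p * j a = j a * p := by
    intro a; simp only [p]
    rw [smul_mul_assoc, add_mul, hzj, mul_smul_comm, mul_add, one_mul, mul_one]
  have hqj : ∀ a, q * j a = j a * q := by
    intro a; simp only [q]
    rw [smul_mul_assoc, sub_mul, hzj, mul_smul_comm, mul_sub, one_mul, mul_one]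
  let Gl : CliffordAlgebra (Q n) × CliffordAlgebra (Q n) →ₗ[ℝ] CliffordAlgebra (Q (n + 1)) :=
    (LinearMap.mulRight ℝ p ∘ₗ j.toLinearMap).coprod (LinearMap.mulRight ℝ q ∘ₗ j.toLinearMap)
  have hGl : ∀ a, Gl a = j a.1 * p + j a.2 * q := fun a => rfl
  let G := AlgHom.ofLinearMap Gl (by rw [hGl]; simp [hpq]) (by
    intro a b
    simp only [hGl, Prod.fst_mul, Prod.snd_mul, map_mul]
    have e1 : j a.1 * p * (j b.1 * p) = j a.1 * j b.1 * p := by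
      rw [mul_assoc, ← mul_assoc p, hpj, mul_assoc (j b.1), hpp, mul_assoc]
    have e2 : j a.1 * p * (j b.2 * q) = 0 := by
      rw [mul_assoc, ← mul_assoc p, hpj, mul_assoc (j b.2), hp_q, mul_zero, mul_zero]
    have e3 : j a.2 * q * (j b.1 * p) = 0 := by
      rw [mul_assoc, ← mul_assoc q, hqj, mul_assoc (j b.1), hq_p, mul_zero, mul_zero]
    have e4 : j a.2 * q * (j b.2 * q) = j a.2 * j b.2 * q := by
      rw [mul_assoc, ← mul_assoc q, hqj, mul_assoc (j b.2), hqq, mul_assoc]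
    rw [add_mul, mul_add, mul_add, e1, e2, e3, e4, add_zero, zero_add])
  have hG : ∀ a, G a = j a.1 * p + j a.2 * q := fun a => rfl
  have hF1j : ∀ a, F₁ (j a) = a := by
    have : F₁.comp j = AlgHom.id ℝ _ := by
      refine CliffordAlgebra.hom_ext (LinearMap.ext fun x => ?_)
      change F₁ (j (ι _ x)) = ι _ x
      rw [hj, hF₁]
      simp
    exact fun a => DFunLike.congr_fun this a
  have hF2j : ∀ a, F₂ (j a) = a := by
    have : F₂.comp j = AlgHom.id ℝ _ := by
      refine CliffordAlgebra.hom_ext (LinearMap.ext fun x => ?_)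
      change F₂ (j (ι _ x)) = ι _ x
      rw [hj, hF₂]
      simp
    exact fun a => DFunLike.congr_fun this a
  have hi : (Fin.init (Pi.single (Fin.last n) 1 : Fin (n + 1) → ℝ) : Fin n → ℝ) = 0 := by
    ext i; simp [Fin.init, Pi.single_apply]
  have hF1z : F₁ z = 1 := by
    simp only [z, e]
    rw [map_mul, hF1j, hF₁, hi]; simp [hsq]
  have hF2z : F₂ z = -1 := by
    simp only [z, e]
    rw [map_mul, hF2j, hF₂, hi]; simp [hsq]
  refine ⟨AlgEquiv.ofAlgHom F G ?_ ?_⟩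
  · refine AlgHom.ext fun a => ?_
    have h1 : F₁ p = 1 := by simp only [p, map_smul, map_add, map_one, hF1z]; module
    have h2 : F₁ q = 0 := by simp only [q, map_smul, map_sub, map_one, hF1z]; module
    have h3 : F₂ p = 0 := by simp only [p, map_smul, map_add, map_one, hF2z]; module
    have h4 : F₂ q = 1 := by simp only [q, map_smul, map_sub, map_one, hF2z]; module
    rw [AlgHom.comp_apply, hG]
    refine Prod.ext ?_ ?_
    · change F₁ _ = a.1
      rw [map_add, map_mul, map_mul, h1, h2, hF1j]; simp
    · change F₂ _ = a.2
      rw [map_add, map_mul, map_mul, h3, h4, hF2j, hF2j]; simp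
  · refine CliffordAlgebra.hom_ext (LinearMap.ext fun x => ?_)
    change G (F₁ (ι _ x), F₂ (ι _ x)) = ι _ x
    rw [hG, hF₁, hF₂]
    simp only [map_add, map_smul]
    have h1 : j (ι _ (Fin.init x)) * p + j (ι _ (Fin.init x)) * q = j (ι _ (Fin.init x)) := by
      rw [← mul_add, hpq, mul_one]
    have h2 : j ω * p - j ω * q = e := by
      rw [← mul_sub, hpmq]; simp only [z]
      rw [← mul_assoc, ← map_mul, hsq, map_one, one_mul]
    have h3 : x = (Fin.snoc (Fin.init x : Fin n → ℝ) 0 : Fin (n + 1) → ℝ) +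
        x (Fin.last n) • Pi.single (Fin.last n) 1 := by
      ext i; refine Fin.lastCases ?_ (fun i => ?_) i <;> simp [Fin.init, Pi.single_apply]
    have h4 : ι (Q (n + 1)) x = j (ι _ (Fin.init x)) + x (Fin.last n) • e := by
      conv_lhs => rw [h3]
      rw [map_add, map_smul, hj]
    rw [h4, ← h2, add_mul, add_mul, smul_mul_assoc, smul_mul_assoc]
    nth_rewrite 3 [← h1]
    module

end CliffSplit

/-- Second identity of eq. (7): `R_{4m+1} = Ω_{4m} = R_{4m} ⊕ R_{4m}`. -/
theorem cliffordAlgebra_four_mul_add_one_isomorphic_prod (m : ℕ) (hm : 1 ≤ m) :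
    Nonempty
      (CliffordAlgebra (QuadraticMap.weightedSumSquares ℝ (fun _ : Fin (4 * m + 1) => (1 : ℝ)))
        ≃ₐ[ℝ]
          CliffordAlgebra (QuadraticMap.weightedSumSquares ℝ (fun _ : Fin (4 * m) => (1 : ℝ))) ×
          CliffordAlgebra (QuadraticMap.weightedSumSquares ℝ (fun _ : Fin (4 * m) => (1 : ℝ)))) := by
  obtain ⟨ω, h1, h2, h3⟩ := CliffSplit.exists_omega m
  exact CliffSplit.split (4 * m) ω h1 h2 h3
end
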